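/- arXiv:2208.10203 — 4 statements merged into one kernel-verified Lean document; each statement's English description precedes it below -/
import Mathlib

section
/- Let 𝒳=(x_j) be a semi-normalized Schauder basis of a quasi-Banach space 𝕏, let 𝕊 be a locally convex subsymmetric sequence space, and let σ=(σ_n) be an ordered partition of ℕ with N_n=|σ_n| and M_r=Σ_{n=1}^r N_n. Assume that the fundamental function Λ[𝕊] has both the lower regularity property and the upper regularity property, that M_r ≲ N_{r+1} for all r, and that 𝕊 satisfies an upper s-estimate for some s≥1 and a lower q-estimate for some q≤∞. Then there is a constant C such that for all r∈ℕ: k̃_r[𝒳,𝕏] ≤ k̃_{M_r}[ℰ,𝕐] ≤ C·max{ k̃_r[𝒳,𝕏], η_r[𝒳,𝕏,s], β_r[𝒳,𝕏,q] }, where ℰ is the unit vector system of 𝕐=𝕐[𝒳,𝕊,σ]. -/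
noncomputable section

open Classical
open scoped ENNReal NNReal

namespace AGpaper

/-! ### Convergence and completeness with respect to a gauge -/

/-- Convergence of a sequence with respect to a gauge (quasi-norm) `q`. -/
def QTendsto {X : Type*} [AddCommGroup X] (q : X → ℝ) (u : ℕ → X) (x : X) : Prop :=
  ∀ ε : ℝ, 0 < ε → ∃ n₀ : ℕ, ∀ n, n₀ ≤ n → q (u n - x) < ε

/-- Cauchy condition with respect to a gauge `q`. -/
def QCauchy {X : Type*} [AddCommGroup X] (q : X → ℝ) (u : ℕ → X) : Prop :=
  ∀ ε : ℝ, 0 < ε → ∃ n₀ : ℕ, ∀ m, n₀ ≤ m → ∀ n, n₀ ≤ n → q (u m - u n) < ε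

/-- A quasi-Banach space structure on a real vector space `X`. -/
structure QuasiBanach (X : Type*) [AddCommGroup X] [Module ℝ X] where
  q : X → ℝ
  kappa : ℝ
  one_le_kappa : 1 ≤ kappa
  q_nonneg : ∀ x, 0 ≤ q x
  q_eq_zero_iff : ∀ x, q x = 0 ↔ x = 0
  q_smul : ∀ (a : ℝ) (x : X), q (a • x) = |a| * q x
  q_triangle : ∀ x y, q (x + y) ≤ kappa * (q x + q y)
  complete : ∀ u : ℕ → X, QCauchy q u → ∃ x, QTendsto q u x

/-- `X` is `p`-convex (0<p≤1): after renorming the quasi-norm is a `p`-norm. -/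
def QuasiBanach.PConvex {X : Type*} [AddCommGroup X] [Module ℝ X]
    (B : QuasiBanach X) (p : ℝ) : Prop :=
  ∃ q' : X → ℝ, (∀ x, 0 ≤ q' x) ∧ (∀ (a : ℝ) (x : X), q' (a • x) = |a| * q' x) ∧
    (∀ x y, q' (x + y) ^ p ≤ q' x ^ p + q' y ^ p) ∧
    ∃ c C : ℝ, 0 < c ∧ ∀ x, c * B.q x ≤ q' x ∧ q' x ≤ C * B.q x

/-! ### Biorthogonal systems and Schauder bases -/

variable {X : Type*} [AddCommGroup X] [Module ℝ X]

/-- A biorthogonal system in a space of vectors `X` which is equipped with a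
membership predicate `mem` (the carrier of the space) and a gauge `nrm`:
the coordinate functionals are linear and bounded on the carrier. -/
structure BioSystem (mem : X → Prop) (nrm : X → ℝ) where
  vec : ℕ → X
  vec_mem : ∀ n, mem (vec n)
  coord : ℕ → X → ℝ
  coord_add : ∀ (n : ℕ) (f g : X), mem f → mem g → coord n (f + g) = coord n f + coord n g
  coord_smul : ∀ (n : ℕ) (a : ℝ) (f : X), mem f → coord n (a • f) = a * coord n f
  coord_bdd : ∀ n : ℕ, ∃ C : ℝ, ∀ f, mem f → |coord n f| ≤ C * nrm f
  biorth : ∀ m n, coord m (vec n) = if m = n then (1 : ℝ) else 0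

/-- A Schauder basis: a biorthogonal system whose expansions converge. -/
structure SchauderB (mem : X → Prop) (nrm : X → ℝ) extends BioSystem mem nrm where
  expansion : ∀ f, mem f →
    QTendsto nrm (fun m => ∑ n ∈ Finset.range m, coord n f • vec n) f

/-- A Schauder basis of a quasi-Banach space. -/
abbrev QBasis {X : Type*} [AddCommGroup X] [Module ℝ X] (B : QuasiBanach X) :=
  SchauderB (fun _ : X => True) B.q

variable {mem : X → Prop} {nrm : X → ℝ}

/-- Coordinate projection on a finite set `A`. -/
def BioSystem.proj (b : BioSystem mem nrm) (A : Finset ℕ) (f : X) : X :=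
  ∑ n ∈ A, b.coord n f • b.vec n

def BioSystem.SemiNormalized (b : BioSystem mem nrm) : Prop :=
  ∃ c C : ℝ, 0 < c ∧ ∀ n, c ≤ nrm (b.vec n) ∧ nrm (b.vec n) ≤ C

/-- `A` is a greedy set of `f`. -/
def BioSystem.GreedySet (b : BioSystem mem nrm) (f : X) (A : Finset ℕ) : Prop :=
  ∀ j ∈ A, ∀ k, k ∉ A → |b.coord k f| ≤ |b.coord j f|

def BioSystem.QuasiGreedy (b : BioSystem mem nrm) : Prop :=
  ∃ C : ℝ, ∀ f, mem f → ∀ A : Finset ℕ, b.GreedySet f A → nrm (b.proj A f) ≤ C * nrm f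

def BioSystem.Democratic (b : BioSystem mem nrm) : Prop :=
  ∃ C : ℝ, ∀ A B : Finset ℕ, A.card ≤ B.card →
    nrm (∑ n ∈ A, b.vec n) ≤ C * nrm (∑ n ∈ B, b.vec n)

def BioSystem.AlmostGreedy (b : BioSystem mem nrm) : Prop :=
  b.QuasiGreedy ∧ b.Democratic

/-- Asymptotic suppression unconditionality: coordinate projections `S_A` with
`|A| < min A` are uniformly bounded. -/
def BioSystem.ASU (b : BioSystem mem nrm) : Prop :=
  ∃ D : ℝ, ∀ A : Finset ℕ, (∀ n ∈ A, A.card < n) →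
    ∀ f, mem f → nrm (b.proj A f) ≤ D * nrm f

/-- The fundamental function (upper super-democracy function). -/
def BioSystem.fundFun (b : BioSystem mem nrm) (m : ℕ) : ℝ :=
  sSup {t : ℝ | ∃ (A : Finset ℕ) (ε : ℕ → ℝ), A.card ≤ m ∧ (∀ n ∈ A, |ε n| = 1) ∧
    t = nrm (∑ n ∈ A, ε n • b.vec n)}

/-- The unconditionality parameters `k_m`. -/
def BioSystem.kparam (b : BioSystem mem nrm) (m : ℕ) : ℝ :=
  sSup {t : ℝ | ∃ (A : Finset ℕ) (f : X), A.card ≤ m ∧ mem f ∧ nrm f ≤ 1 ∧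
    t = nrm (b.proj A f)}

/-- The unconditionality parameters `k̃_m` (restricted to the span of the first
`m` basis vectors). -/
def BioSystem.ktilde (b : BioSystem mem nrm) (m : ℕ) : ℝ :=
  sSup {t : ℝ | ∃ (A : Finset ℕ) (a : ℕ → ℝ),
    nrm (∑ n ∈ Finset.range m, a n • b.vec n) ≤ 1 ∧
    t = nrm (b.proj A (∑ n ∈ Finset.range m, a n • b.vec n))}

/-! ### Symmetric and subsymmetric sequence spaces -/

/-- The indicator of `{0, 1, ..., m-1}`. -/
def indic (m : ℕ) : ℕ → ℝ := fun j => if j < m then 1 else 0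

/-- The `n`-th unit vector. -/
def unitVec (n : ℕ) : ℕ → ℝ := fun j => if j = n then 1 else 0

/-- The spreading `Σ_n ε_n f_n e_{φ(n)}` of a sequence `f`. -/
def spread (φ : ℕ → ℕ) (ε : ℕ → ℝ) (f : ℕ → ℝ) : ℕ → ℝ :=
  fun j => if h : ∃ n, φ n = j then ε h.choose * f h.choose else 0

/-- A symmetric sequence space: a quasi-Banach sequence space whose quasi-norm is
invariant under permutations and signs. -/
structure SymmetricSpace where
  mem : (ℕ → ℝ) → Prop
  nrm : (ℕ → ℝ) → ℝ
  kappa : ℝ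
  one_le_kappa : 1 ≤ kappa
  zero_mem : mem 0
  add_mem : ∀ {f g}, mem f → mem g → mem (f + g)
  smul_mem : ∀ (a : ℝ) {f}, mem f → mem (a • f)
  nrm_nonneg : ∀ f, 0 ≤ nrm f
  nrm_eq_zero : ∀ {f}, mem f → (nrm f = 0 ↔ f = 0)
  nrm_smul : ∀ (a : ℝ) (f : ℕ → ℝ), nrm (a • f) = |a| * nrm f
  nrm_triangle : ∀ {f g}, mem f → mem g → nrm (f + g) ≤ kappa * (nrm f + nrm g)
  complete : ∀ u : ℕ → (ℕ → ℝ), (∀ n, mem (u n)) → QCauchy nrm u →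
    ∃ f, mem f ∧ QTendsto nrm u f
  symmetric : ∀ {f}, mem f → ∀ (ε : ℕ → ℝ), (∀ n, |ε n| = 1) → ∀ π : Equiv.Perm ℕ,
    mem (fun j => ε j * f (π j)) ∧ nrm (fun j => ε j * f (π j)) = nrm f

/-- Fundamental function of a symmetric sequence space. -/
def SymmetricSpace.Lam (S : SymmetricSpace) (m : ℕ) : ℝ := S.nrm (indic m)

/-- A (locally convex, i.e. Banach) subsymmetric sequence space. -/
structure SubsymmetricSpace where
  mem : (ℕ → ℝ) → Prop
  nrm : (ℕ → ℝ) → ℝ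
  zero_mem : mem 0
  add_mem : ∀ {f g}, mem f → mem g → mem (f + g)
  smul_mem : ∀ (a : ℝ) {f}, mem f → mem (a • f)
  nrm_nonneg : ∀ f, 0 ≤ nrm f
  nrm_eq_zero : ∀ {f}, mem f → (nrm f = 0 ↔ f = 0)
  nrm_smul : ∀ (a : ℝ) (f : ℕ → ℝ), nrm (a • f) = |a| * nrm f
  nrm_triangle : ∀ {f g}, mem f → mem g → nrm (f + g) ≤ nrm f + nrm g
  complete : ∀ u : ℕ → (ℕ → ℝ), (∀ n, mem (u n)) → QCauchy nrm u →
    ∃ f, mem f ∧ QTendsto nrm u f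
  unit_mem : ∀ n, mem (unitVec n)
  unit_basis : ∀ f, mem f →
    QTendsto nrm (fun m => fun j => if j < m then f j else 0) f
  subsym : ∀ {f}, mem f → ∀ (ε : ℕ → ℝ), (∀ n, |ε n| = 1) → ∀ φ : ℕ → ℕ, StrictMono φ →
    mem (spread φ ε f) ∧ nrm (spread φ ε f) = nrm f

/-- Fundamental function of (the unit vector system of) a subsymmetric sequence space. -/
def SubsymmetricSpace.Lam (S : SubsymmetricSpace) (m : ℕ) : ℝ := S.nrm (indic m)

/-- The dual fundamental function `Λ*_m = m / Λ_m`. -/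
def SubsymmetricSpace.LamStar (S : SubsymmetricSpace) (m : ℕ) : ℝ := (m : ℝ) / S.Lam m

/-- Lower regularity property of a sequence of positive reals (indexed by `m ≥ 1`). -/
def LRP (Γ : ℕ → ℝ) : Prop := ∃ b : ℕ, 0 < b ∧ ∀ m : ℕ, 1 ≤ m → 2 * Γ m ≤ Γ (b * m)

/-- Upper regularity property. -/
def URP (Γ : ℕ → ℝ) : Prop := ∃ b : ℕ, 0 < b ∧ ∀ m : ℕ, 1 ≤ m → 2 * Γ (b * m) ≤ (b : ℝ) * Γ m

/-- Superreflexivity of a subsymmetric sequence space: it admits an equivalent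
uniformly convex norm. -/
def SubsymmetricSpace.Superreflexive (S : SubsymmetricSpace) : Prop :=
  ∃ nrm' : (ℕ → ℝ) → ℝ,
    (∀ f, S.mem f → 0 ≤ nrm' f) ∧
    (∀ (a : ℝ) (f), S.mem f → nrm' (a • f) = |a| * nrm' f) ∧
    (∀ f g, S.mem f → S.mem g → nrm' (f + g) ≤ nrm' f + nrm' g) ∧
    (∃ c C : ℝ, 0 < c ∧ ∀ f, S.mem f → c * S.nrm f ≤ nrm' f ∧ nrm' f ≤ C * S.nrm f) ∧
    (∀ ε : ℝ, 0 < ε → ∃ δ : ℝ, 0 < δ ∧ ∀ f g, S.mem f → S.mem g →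
      nrm' f ≤ 1 → nrm' g ≤ 1 → ε ≤ nrm' (f - g) → nrm' (f + g) ≤ 2 * (1 - δ))

/-! ### Upper and lower estimates -/

/-- A finite family with pairwise disjoint supports. -/
def DisjFam {ι : Type*} (F : ι → (ℕ → ℝ)) (J : Finset ι) : Prop :=
  ∀ i ∈ J, ∀ j ∈ J, i ≠ j → ∀ k, F i k = 0 ∨ F j k = 0

/-- `(Σ_{i∈J} |g i|^q)^{1/q}`, interpreted as `max_{i∈J} |g i|` when `q = ∞`. -/
def estNorm (q : ℝ≥0∞) {ι : Type*} (J : Finset ι) (g : ι → ℝ) : ℝ :=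
  if q = ⊤ then ((J.sup fun i => Real.toNNReal |g i| : NNReal) : ℝ)
  else (∑ i ∈ J, |g i| ^ q.toReal) ^ (1 / q.toReal)

/-- Upper `s`-estimate for a subsymmetric space (`s` finite). -/
def SubsymmetricSpace.UpperEst (S : SubsymmetricSpace) (s : ℝ) : Prop :=
  ∃ C : ℝ, ∀ (J : Finset ℕ) (F : ℕ → (ℕ → ℝ)), (∀ i ∈ J, S.mem (F i)) → DisjFam F J →
    S.nrm (∑ i ∈ J, F i) ≤ C * (∑ i ∈ J, S.nrm (F i) ^ s) ^ (1 / s)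

/-- Lower `q`-estimate for a subsymmetric space (`q` finite). -/
def SubsymmetricSpace.LowerEst (S : SubsymmetricSpace) (q : ℝ) : Prop :=
  ∃ C : ℝ, ∀ (J : Finset ℕ) (F : ℕ → (ℕ → ℝ)), (∀ i ∈ J, S.mem (F i)) → DisjFam F J →
    (∑ i ∈ J, S.nrm (F i) ^ q) ^ (1 / q) ≤ C * S.nrm (∑ i ∈ J, F i)

/-- Lower `q`-estimate, `q ∈ (0, ∞]`. -/
def SubsymmetricSpace.LowerEstE (S : SubsymmetricSpace) (q : ℝ≥0∞) : Prop :=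
  ∃ C : ℝ, ∀ (J : Finset ℕ) (F : ℕ → (ℕ → ℝ)), (∀ i ∈ J, S.mem (F i)) → DisjFam F J →
    estNorm q J (fun i => S.nrm (F i)) ≤ C * S.nrm (∑ i ∈ J, F i)

/-! ### Squeeze-symmetry -/

/-- The system is squeezed between the symmetric spaces `S₁` and `S₂`: the series
transform is bounded from `S₁` (on finitely supported vectors) and the coefficient
transform is bounded into `S₂`. -/
def BioSystem.SqueezedBetween (b : BioSystem mem nrm) (S₁ S₂ : SymmetricSpace) : Prop :=
  (∃ C : ℝ, ∀ a : ℕ →₀ ℝ, S₁.mem ⇑a →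
    nrm (∑ n ∈ a.support, a n • b.vec n) ≤ C * S₁.nrm ⇑a) ∧
  (∃ C : ℝ, ∀ f, mem f → S₂.mem (fun n => b.coord n f) ∧
    S₂.nrm (fun n => b.coord n f) ≤ C * nrm f)

/-- Squeeze-symmetric system: squeezed between two symmetric spaces with
equivalent fundamental functions. -/
def BioSystem.SqueezeSymmetric (b : BioSystem mem nrm) : Prop :=
  ∃ S₁ S₂ : SymmetricSpace, b.SqueezedBetween S₁ S₂ ∧
    ∃ c C : ℝ, 0 < c ∧ ∀ m : ℕ, 1 ≤ m →
      c * S₂.Lam m ≤ S₁.Lam m ∧ S₁.Lam m ≤ C * S₂.Lam m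

/-! ### Ordered partitions and the Dilworth–Kalton–Kutzarova construction -/

/-- An ordered partition of `ℕ` into (finite, nonempty) integer intervals. -/
structure OrderedPartition where
  part : ℕ → Finset ℕ
  nonempty : ∀ n, (part n).Nonempty
  ordered : ∀ n, ∀ i ∈ part n, ∀ j ∈ part (n + 1), i < j
  covers : ∀ k : ℕ, ∃ n, k ∈ part n

def OrderedPartition.N (σ : OrderedPartition) (n : ℕ) : ℕ := (σ.part n).card

def OrderedPartition.M (σ : OrderedPartition) (r : ℕ) : ℕ := ∑ n ∈ Finset.range r, σ.N n

/-- The averaging projection `P_σ`. -/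
def OrderedPartition.Pavg (σ : OrderedPartition) (f : ℕ → ℝ) : ℕ → ℝ := fun j =>
  if h : ∃ n, j ∈ σ.part n then
    (∑ i ∈ σ.part h.choose, f i) / ((σ.part h.choose).card : ℝ)
  else 0

/-- The complementary projection `Q_σ = Id - P_σ`. -/
def OrderedPartition.Qavg (σ : OrderedPartition) (f : ℕ → ℝ) : ℕ → ℝ := f - σ.Pavg f

/-- The functionals `v_n* = (Λ*_{N_n})⁻¹ Σ_{j∈σ_n} e_j*`. -/
def vstar (S : SubsymmetricSpace) (σ : OrderedPartition) (n : ℕ) (f : ℕ → ℝ) : ℝ :=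
  (S.Lam (σ.N n) / (σ.N n : ℝ)) * ∑ j ∈ σ.part n, f j

/-- The map `H(f) = Σ_n v_n*(f) x_n`. -/
def Hmap {X : Type*} [AddCommGroup X] [Module ℝ X] (B : QuasiBanach X) (b : QBasis B)
    (S : SubsymmetricSpace) (σ : OrderedPartition) (f : ℕ → ℝ) : X :=
  ∑ᶠ n, vstar S σ n f • b.vec n

/-- The quasi-norm `‖f‖ = ‖Q_σ f‖_S + ‖H f‖_X` on finitely supported sequences,
whose completion is the space `𝕐[𝒳,𝕊,σ]`. -/
def YNorm {X : Type*} [AddCommGroup X] [Module ℝ X] (B : QuasiBanach X) (b : QBasis B)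
    (S : SubsymmetricSpace) (σ : OrderedPartition) (f : ℕ → ℝ) : ℝ :=
  S.nrm (σ.Qavg f) + B.q (Hmap B b S σ f)

/-! ### Concrete sequence spaces -/

/-- Membership in `ℓ_p`, `0 < p < ∞`. -/
def lpMem (p : ℝ) (f : ℕ → ℝ) : Prop := Summable fun n => |f n| ^ p

/-- The `ℓ_p` quasi-norm, `0 < p < ∞`. -/
def lpNrm (p : ℝ) (f : ℕ → ℝ) : ℝ := (∑' n, |f n| ^ p) ^ (1 / p)

/-- Membership in `ℓ_p` for extended `p` (where `ℓ_∞` means `c₀`). -/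
def lpMemE (p : ℝ≥0∞) (f : ℕ → ℝ) : Prop :=
  if p = ⊤ then Filter.Tendsto f Filter.atTop (nhds 0) else lpMem p.toReal f

/-- The `ℓ_p` quasi-norm for extended `p`. -/
def lpNrmE (p : ℝ≥0∞) (f : ℕ → ℝ) : ℝ :=
  if p = ⊤ then ⨆ n, |f n| else lpNrm p.toReal f

/-- Membership in the matrix space `Z_{p,q} = ℓ_q(ℓ_p)` (with `ℓ_∞` meaning `c₀`). -/
def ZMem (p q : ℝ≥0∞) (f : ℕ → ℕ → ℝ) : Prop :=
  (∀ n, lpMemE p (f n)) ∧ lpMemE q (fun n => lpNrmE p (f n))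

/-- The quasi-norm of `Z_{p,q} = ℓ_q(ℓ_p)`. -/
def ZNrm (p q : ℝ≥0∞) (f : ℕ → ℕ → ℝ) : ℝ := lpNrmE q (fun n => lpNrmE p (f n))


/-- The parameter `η_r[𝒳,𝕏,s]`: the smallest constant `C` with
`(Σ_{n<r} |a_n|^s)^{1/s} ≤ C ‖Σ_{n<r} a_n x_n‖`. -/
def etaParam {X : Type*} [AddCommGroup X] [Module ℝ X] (B : QuasiBanach X)
    (b : QBasis B) (s : ℝ) (r : ℕ) : ℝ :=
  sInf {C : ℝ | 0 ≤ C ∧ ∀ a : ℕ → ℝ,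
    (∑ n ∈ Finset.range r, |a n| ^ s) ^ (1 / s) ≤
      C * B.q (∑ n ∈ Finset.range r, a n • b.vec n)}

/-- The parameter `β_r[𝒳,𝕏,q]`: the smallest constant `C` with
`‖Σ_{n<r} a_n x_n‖ ≤ C (Σ_{n<r} |a_n|^q)^{1/q}`. -/
def betaParam {X : Type*} [AddCommGroup X] [Module ℝ X] (B : QuasiBanach X)
    (b : QBasis B) (q : ℝ≥0∞) (r : ℕ) : ℝ :=
  sInf {C : ℝ | 0 ≤ C ∧ ∀ a : ℕ → ℝ,
    B.q (∑ n ∈ Finset.range r, a n • b.vec n) ≤ C * estNorm q (Finset.range r) a}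

/-! ### Partition structure -/

lemma OP_ordered_lt (σ : OrderedPartition) {n m : ℕ} (h : n < m) :
    ∀ i ∈ σ.part n, ∀ j ∈ σ.part m, i < j := by
  induction m, h using Nat.le_induction with
  | base => exact σ.ordered n
  | succ m hm ih =>
    intro i hi j hj
    obtain ⟨k, hk⟩ := σ.nonempty m
    exact (ih i hi k hk).trans (σ.ordered m k hk j hj)

lemma OP_M_succ (σ : OrderedPartition) (n : ℕ) : σ.M (n + 1) = σ.M n + σ.N n := by
  simp [OrderedPartition.M, Finset.sum_range_succ]

lemma OP_N_pos (σ : OrderedPartition) (n : ℕ) : 0 < σ.N n :=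
  Finset.card_pos.mpr (σ.nonempty n)

lemma interval_aux (T : Finset ℕ) (m : ℕ) (hT : T.Nonempty) (h1 : ∀ j ∈ T, m ≤ j)
    (h2 : ∀ j ∈ T, ∀ i, m ≤ i → i < j → i ∈ T) : T = Finset.Ico m (m + T.card) := by
  have hmax := T.max'_mem hT
  have : T = Finset.Ico m (T.max' hT + 1) := by
    ext i
    rw [Finset.mem_Ico]
    constructor
    · intro hi
      exact ⟨h1 i hi, Nat.lt_succ_of_le (T.le_max' i hi)⟩
    · rintro ⟨ha, hb⟩
      rcases Nat.lt_or_ge i (T.max' hT) with h | h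
      · exact h2 _ hmax i ha h
      · have : i = T.max' hT := by omega
        rw [this]; exact hmax
  have hc : T.card = T.max' hT + 1 - m := by
    conv_lhs => rw [this]
    simp
  have := h1 _ hmax
  have h3 : m + T.card = T.max' hT + 1 := by omega
  rw [h3]; assumption

lemma OP_part_eq (σ : OrderedPartition) (n : ℕ) :
    σ.part n = Finset.Ico (σ.M n) (σ.M (n + 1)) := by
  induction n using Nat.strong_induction_on with
  | _ n ih =>
    have hprev : ∀ i, i < σ.M n → ∃ k < n, i ∈ σ.part k := by
      intro i hi
      have : ∀ t ≤ n, i < σ.M t → ∃ k < n, i ∈ σ.part k := by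
        intro t
        induction t with
        | zero => intro _ h; simp [OrderedPartition.M] at h
        | succ t iht =>
          intro ht h
          rcases Nat.lt_or_ge i (σ.M t) with h' | h'
          · exact iht (by omega) h'
          · exact ⟨t, by omega, by rw [ih t (by omega)]; exact Finset.mem_Ico.mpr ⟨h', h⟩⟩
      exact this n le_rfl hi
    have hmono : ∀ k < n, σ.M (k + 1) ≤ σ.M n := by
      intro k hk
      exact Finset.sum_le_sum_of_subset (Finset.range_mono hk)
    rw [OP_M_succ]
    apply interval_aux _ _ (σ.nonempty n)
    · intro j hj
      by_contra hlt
      obtain ⟨k, hk, hjk⟩ := hprev j (by omega)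
      exact lt_irrefl _ (OP_ordered_lt σ hk j hjk j hj)
    · intro j hj i hi hij
      obtain ⟨k, hk⟩ := σ.covers i
      rcases lt_trichotomy k n with h | h | h
      · rw [ih k h, Finset.mem_Ico] at hk
        have := hmono k h
        omega
      · exact h ▸ hk
      · have := OP_ordered_lt σ h j hj i hk
        omega

def OPidx (σ : OrderedPartition) (j : ℕ) : ℕ := (σ.covers j).choose

lemma OPidx_mem (σ : OrderedPartition) (j : ℕ) : j ∈ σ.part (OPidx σ j) :=
  (σ.covers j).choose_spec

lemma OP_uniq (σ : OrderedPartition) {j n m : ℕ} (h : j ∈ σ.part n) (h' : j ∈ σ.part m) :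
    n = m := by
  rcases lt_trichotomy n m with h1 | h1 | h1
  · exact absurd (OP_ordered_lt σ h1 j h j h') (lt_irrefl _)
  · exact h1
  · exact absurd (OP_ordered_lt σ h1 j h' j h) (lt_irrefl _)

lemma OPidx_eq (σ : OrderedPartition) {j n : ℕ} (h : σ.M n ≤ j) (h' : j < σ.M (n + 1)) :
    OPidx σ j = n :=
  OP_uniq σ (OPidx_mem σ j) (by rw [OP_part_eq]; exact Finset.mem_Ico.mpr ⟨h, h'⟩)

lemma OPidx_spec (σ : OrderedPartition) (j : ℕ) :
    σ.M (OPidx σ j) ≤ j ∧ j < σ.M (OPidx σ j) + σ.N (OPidx σ j) := by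
  have := OPidx_mem σ j
  rw [OP_part_eq, Finset.mem_Ico, OP_M_succ] at this
  exact this

lemma OP_M_mono (σ : OrderedPartition) : Monotone σ.M :=
  monotone_nat_of_le_succ fun n => by rw [OP_M_succ]; omega

lemma OPidx_ge (σ : OrderedPartition) {j r : ℕ} (h : σ.M r ≤ j) : r ≤ OPidx σ j := by
  by_contra hlt
  have h1 : σ.M (OPidx σ j + 1) ≤ σ.M r := OP_M_mono σ (by omega)
  have h2 := OPidx_spec σ j
  rw [OP_M_succ] at h1
  omega

lemma Pavg_apply (σ : OrderedPartition) (f : ℕ → ℝ) {j n : ℕ} (h : j ∈ σ.part n) :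
    σ.Pavg f j = (∑ i ∈ σ.part n, f i) / (σ.N n : ℝ) := by
  have hex : ∃ n, j ∈ σ.part n := ⟨n, h⟩
  have : hex.choose = n := OP_uniq σ hex.choose_spec h
  simp only [OrderedPartition.Pavg, dif_pos hex, this, OrderedPartition.N]

/-! ### Subsymmetric spaces -/

lemma spread_apply {φ : ℕ → ℕ} (hφ : StrictMono φ) (ε f : ℕ → ℝ) (n : ℕ) :
    spread φ ε f (φ n) = ε n * f n := by
  have hex : ∃ m, φ m = φ n := ⟨n, rfl⟩
  have : hex.choose = n := hφ.injective hex.choose_spec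
  simp only [spread, dif_pos hex, this]

lemma spread_notin {φ : ℕ → ℕ} (ε f : ℕ → ℝ) {j : ℕ} (h : ∀ n, φ n ≠ j) :
    spread φ ε f j = 0 := by
  have hex : ¬ ∃ m, φ m = j := by push Not; exact h
  simp only [spread, dif_neg hex]

lemma spread_id (ε f : ℕ → ℝ) : spread id ε f = fun j => ε j * f j := by
  funext j
  exact spread_apply strictMono_id ε f j

lemma spread_val_aux {φ₁ φ₂ : ℕ → ℕ} (hφ₁ : StrictMono φ₁) (hφ₂ : StrictMono φ₂)
    {g h : ℕ → ℝ}
    (h1 : ∀ j, g j ≠ 0 → ∃ i, φ₂ i = φ₁ j ∧ h i = g j)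
    (h2 : ∀ j, h j ≠ 0 → ∃ i, φ₁ i = φ₂ j ∧ g i = h j) :
    spread φ₁ (fun _ => 1) g = spread φ₂ (fun _ => 1) h := by
  funext x
  by_cases ha : ∃ j, φ₁ j = x ∧ g j ≠ 0
  · obtain ⟨j, rfl, hj⟩ := ha
    obtain ⟨i, hi, hi'⟩ := h1 j hj
    rw [spread_apply hφ₁]
    rw [← hi, spread_apply hφ₂, hi']
  · by_cases hb : ∃ j, φ₂ j = x ∧ h j ≠ 0
    · obtain ⟨j, rfl, hj⟩ := hb
      obtain ⟨i, hi, hi'⟩ := h2 j hj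
      exact absurd ⟨i, hi, by rw [hi']; exact hj⟩ ha
    · push Not at ha hb
      have z1 : spread φ₁ (fun _ => 1) g x = 0 := by
        by_cases hx : ∃ j, φ₁ j = x
        · obtain ⟨j, rfl⟩ := hx
          rw [spread_apply hφ₁, ha j rfl, mul_zero]
        · push Not at hx; exact spread_notin _ _ hx
      have z2 : spread φ₂ (fun _ => 1) h x = 0 := by
        by_cases hx : ∃ j, φ₂ j = x
        · obtain ⟨j, rfl⟩ := hx
          rw [spread_apply hφ₂, hb j rfl, mul_zero]
        · push Not at hx; exact spread_notin _ _ hx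
      rw [z1, z2]

lemma nrm_move (S : SubsymmetricSpace) {φ₁ φ₂ : ℕ → ℕ} (hφ₁ : StrictMono φ₁)
    (hφ₂ : StrictMono φ₂) {g h : ℕ → ℝ} (hg : S.mem g) (hh : S.mem h)
    (h1 : ∀ j, g j ≠ 0 → ∃ i, φ₂ i = φ₁ j ∧ h i = g j)
    (h2 : ∀ j, h j ≠ 0 → ∃ i, φ₁ i = φ₂ j ∧ g i = h j) : S.nrm g = S.nrm h := by
  have e := spread_val_aux hφ₁ hφ₂ h1 h2
  have a := (S.subsym hg (fun _ => 1) (by simp) φ₁ hφ₁).2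
  have b := (S.subsym hh (fun _ => 1) (by simp) φ₂ hφ₂).2
  rw [← a, ← b, e]

lemma mem_sum (S : SubsymmetricSpace) {ι : Type*} (J : Finset ι) (F : ι → ℕ → ℝ)
    (h : ∀ i ∈ J, S.mem (F i)) : S.mem (∑ i ∈ J, F i) := by
  induction J using Finset.induction_on with
  | empty => simpa using S.zero_mem
  | insert a J ha ih =>
    rw [Finset.sum_insert ha]
    exact S.add_mem (h a (by simp)) (ih fun i hi => h i (by simp [hi]))

lemma nrm_zero' (S : SubsymmetricSpace) : S.nrm 0 = 0 := (S.nrm_eq_zero S.zero_mem).mpr rfl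

lemma nrm_sum_le (S : SubsymmetricSpace) {ι : Type*} (J : Finset ι) (F : ι → ℕ → ℝ)
    (h : ∀ i ∈ J, S.mem (F i)) : S.nrm (∑ i ∈ J, F i) ≤ ∑ i ∈ J, S.nrm (F i) := by
  induction J using Finset.induction_on with
  | empty => simp [nrm_zero']
  | insert a J ha ih =>
    rw [Finset.sum_insert ha, Finset.sum_insert ha]
    refine (S.nrm_triangle (h a (by simp)) (mem_sum S J F fun i hi => h i (by simp [hi]))).trans ?_
    gcongr
    exact ih fun i hi => h i (by simp [hi])

lemma mem_fin (S : SubsymmetricSpace) {f : ℕ → ℝ} {m : ℕ} (h : ∀ j, m ≤ j → f j = 0) :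
    S.mem f := by
  have : f = ∑ i ∈ Finset.range m, f i • unitVec i := by
    funext j
    simp only [Finset.sum_apply, Pi.smul_apply, unitVec, smul_eq_mul, mul_ite, mul_one, mul_zero,
      Finset.sum_ite_eq, Finset.mem_range]
    split_ifs with hj
    · rfl
    · exact h j (by omega)
  rw [this]
  exact mem_sum S _ _ fun i _ => S.smul_mem _ (S.unit_mem i)

lemma nrm_restrict (S : SubsymmetricSpace) {f : ℕ → ℝ} (hf : S.mem f) (p : ℕ → Prop)
    [DecidablePred p] :
    S.nrm (fun j => if p j then f j else 0) ≤ S.nrm f := by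
  set ε : ℕ → ℝ := fun j => if p j then 1 else -1 with hε
  have hs := S.subsym hf ε (by intro n; simp only [hε]; split_ifs <;> simp) id strictMono_id
  rw [spread_id] at hs
  have e : (fun j => if p j then f j else 0) = (1/2 : ℝ) • (f + fun j => ε j * f j) := by
    funext j
    simp only [hε, Pi.smul_apply, Pi.add_apply, smul_eq_mul]
    split_ifs <;> ring
  rw [e, S.nrm_smul]
  have := S.nrm_triangle hf hs.1
  rw [hs.2] at this
  rw [abs_of_pos (by norm_num)]
  linarith

/-! ### Boundedness of the averaging projection -/

def phiC (σ : OrderedPartition) (c : ℕ → ℕ) (j : ℕ) : ℕ :=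
  j + σ.M (OPidx σ j) + c (OPidx σ j)

lemma phiC_strictMono (σ : OrderedPartition) (c : ℕ → ℕ) (hc : ∀ n, c n ≤ σ.N n) :
    StrictMono (phiC σ c) := by
  intro i j hij
  unfold phiC
  have h1 := OPidx_spec σ i
  have hc1 := hc (OPidx σ i)
  rcases Nat.lt_or_ge j (σ.M (OPidx σ i + 1)) with h | h
  · have : OPidx σ j = OPidx σ i := OPidx_eq σ (by omega) h
    rw [this]; omega
  · have h3 := OPidx_ge σ h
    have h4 : σ.M (OPidx σ i + 1) ≤ σ.M (OPidx σ j) := OP_M_mono σ h3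
    rw [OP_M_succ] at h4
    omega

def shiftU (σ : OrderedPartition) (c : ℕ → ℕ) (f : ℕ → ℝ) (j : ℕ) : ℝ :=
  if j + c (OPidx σ j) < σ.M (OPidx σ j + 1) then f (j + c (OPidx σ j)) else 0

def shiftV (σ : OrderedPartition) (c : ℕ → ℕ) (f : ℕ → ℝ) (j : ℕ) : ℝ :=
  if j + c (OPidx σ j) < σ.M (OPidx σ j + 1) then 0
  else f (j + c (OPidx σ j) - σ.N (OPidx σ j))

lemma shiftU_supp (σ : OrderedPartition) (c : ℕ → ℕ) {f : ℕ → ℝ} {r : ℕ}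
    (hf : ∀ j, σ.M r ≤ j → f j = 0) : ∀ j, σ.M r ≤ j → shiftU σ c f j = 0 := by
  intro j hj
  unfold shiftU
  split_ifs
  · exact hf _ (by omega)
  · rfl

lemma shiftV_supp (σ : OrderedPartition) (c : ℕ → ℕ) {f : ℕ → ℝ} {r : ℕ}
    (hf : ∀ j, σ.M r ≤ j → f j = 0) : ∀ j, σ.M r ≤ j → shiftV σ c f j = 0 := by
  intro j hj
  unfold shiftV
  split_ifs with h
  · rfl
  · have := OP_M_mono σ (OPidx_ge σ hj)
    rw [OP_M_succ] at h
    exact hf _ (by omega)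

lemma shiftU_nrm (S : SubsymmetricSpace) (σ : OrderedPartition) (c : ℕ → ℕ)
    (hc : ∀ n, c n ≤ σ.N n) {f : ℕ → ℝ} {r : ℕ}
    (hf : ∀ j, σ.M r ≤ j → f j = 0) : S.nrm (shiftU σ c f) ≤ S.nrm f := by
  set g : ℕ → ℝ := fun i => if σ.M (OPidx σ i) + c (OPidx σ i) ≤ i then f i else 0 with hg
  have hgm : S.mem g := mem_fin S (m := σ.M r) (by intro j hj; simp [hg, hf j hj])
  have : S.nrm g = S.nrm (shiftU σ c f) := by
    refine nrm_move S (phiC_strictMono σ (fun _ => 0) (by simp)) (phiC_strictMono σ c hc) hgm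
      (mem_fin S (shiftU_supp σ c hf)) ?_ ?_
    · intro j hj
      simp only [hg, ne_eq, ite_eq_right_iff, Classical.not_imp] at hj
      have hs := OPidx_spec σ j
      have hi : OPidx σ (j - c (OPidx σ j)) = OPidx σ j :=
        OPidx_eq σ (by omega) (by rw [OP_M_succ]; omega)
      refine ⟨j - c (OPidx σ j), ?_, ?_⟩
      · simp only [phiC, hi]; omega
      · have h5 : j - c (OPidx σ j) + c (OPidx σ j) = j := by omega
        simp only [shiftU, hi, hg, h5, OP_M_succ]
        rw [if_pos hs.2, if_pos hj.1]
    · intro j hj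
      simp only [shiftU, ne_eq, ite_eq_right_iff, Classical.not_imp] at hj
      have hs := OPidx_spec σ j
      have hi : OPidx σ (j + c (OPidx σ j)) = OPidx σ j := OPidx_eq σ (by omega) hj.1
      refine ⟨j + c (OPidx σ j), ?_, ?_⟩
      · simp only [phiC, hi]; omega
      · simp only [shiftU, hi, hg]
        rw [if_pos hj.1, if_pos (by omega)]
  rw [← this]
  exact nrm_restrict S (mem_fin S hf) (fun i => _)

lemma shiftV_nrm (S : SubsymmetricSpace) (σ : OrderedPartition) (c : ℕ → ℕ)
    (hc : ∀ n, c n ≤ σ.N n) {f : ℕ → ℝ} {r : ℕ}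
    (hf : ∀ j, σ.M r ≤ j → f j = 0) : S.nrm (shiftV σ c f) ≤ S.nrm f := by
  set g : ℕ → ℝ := fun i => if i < σ.M (OPidx σ i) + c (OPidx σ i) then f i else 0 with hg
  have hgm : S.mem g := mem_fin S (m := σ.M r) (by intro j hj; simp [hg, hf j hj])
  have : S.nrm g = S.nrm (shiftV σ c f) := by
    refine nrm_move S (phiC_strictMono σ (fun n => σ.N n - c n) (by simp))
      (phiC_strictMono σ (fun _ => 0) (by simp)) hgm
      (mem_fin S (shiftV_supp σ c hf)) ?_ ?_
    · intro j hj
      simp only [hg, ne_eq, ite_eq_right_iff, Classical.not_imp] at hj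
      have hs := OPidx_spec σ j
      have hcn := hc (OPidx σ j)
      have hi : OPidx σ (j + σ.N (OPidx σ j) - c (OPidx σ j)) = OPidx σ j :=
        OPidx_eq σ (by omega) (by rw [OP_M_succ]; omega)
      refine ⟨j + σ.N (OPidx σ j) - c (OPidx σ j), ?_, ?_⟩
      · simp only [phiC, hi]; omega
      · have h5 : j + σ.N (OPidx σ j) - c (OPidx σ j) + c (OPidx σ j) - σ.N (OPidx σ j) = j := by
          omega
        simp only [shiftV, hi, hg, h5, OP_M_succ]
        rw [if_neg (by omega), if_pos hj.1]
    · intro j hj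
      simp only [shiftV, ne_eq, ite_eq_left_iff, Classical.not_imp] at hj
      have hs := OPidx_spec σ j
      have hcn := hc (OPidx σ j)
      have h6 := hj.1
      rw [OP_M_succ] at h6
      have hi : OPidx σ (j + c (OPidx σ j) - σ.N (OPidx σ j)) = OPidx σ j :=
        OPidx_eq σ (by omega) (by rw [OP_M_succ]; omega)
      refine ⟨j + c (OPidx σ j) - σ.N (OPidx σ j), ?_, ?_⟩
      · simp only [phiC, hi]; omega
      · simp only [shiftV, hi, hg]
        rw [if_neg hj.1, if_pos (by omega)]
  rw [← this]
  exact nrm_restrict S (mem_fin S hf) (fun i => _)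

lemma periodic_sum_shift (F : ℕ → ℝ) (N : ℕ) (hF : ∀ k, F (k + N) = F k) (a : ℕ) :
    ∑ k ∈ Finset.range N, F (a + k) = ∑ k ∈ Finset.range N, F k := by
  induction a with
  | zero => simp
  | succ a ih =>
    rw [← ih]
    have h1 := Finset.sum_range_succ (fun k => F (a + k)) N
    have h2 := Finset.sum_range_succ' (fun k => F (a + k)) N
    simp only [hF, add_zero] at h1 h2
    have h3 : ∀ k, F (a + 1 + k) = F (a + (k + 1)) := fun k => by congr 1; ring
    simp only [h3]
    linarith

lemma periodic_sum_mul (F : ℕ → ℝ) (N : ℕ) (hF : ∀ k, F (k + N) = F k) (t : ℕ) :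
    ∑ k ∈ Finset.range (N * t), F k = t * ∑ k ∈ Finset.range N, F k := by
  induction t with
  | zero => simp
  | succ t ih =>
    rw [Nat.mul_succ, Finset.sum_range_add, ih, periodic_sum_shift F N hF]
    push_cast; ring

lemma shift_sum (σ : OrderedPartition) (f : ℕ → ℝ) (j : ℕ) (L : ℕ)
    (hL : σ.N (OPidx σ j) ∣ L) (hL0 : 0 < L) :
    ∑ k ∈ Finset.range L, (shiftU σ (fun n => k % σ.N n) f j
      + shiftV σ (fun n => k % σ.N n) f j) = L * σ.Pavg f j := by
  obtain ⟨t, rfl⟩ := hL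
  set n := OPidx σ j with hn
  have hN := OP_N_pos σ n
  have hs := OPidx_spec σ j
  rw [← hn] at hs
  set F : ℕ → ℝ := fun k => f (σ.M n + k % σ.N n) with hF
  have hFp : ∀ k, F (k + σ.N n) = F k := by intro k; simp [hF]
  have h1 : ∀ k, shiftU σ (fun n => k % σ.N n) f j + shiftV σ (fun n => k % σ.N n) f j
      = F (j - σ.M n + k) := by
    intro k
    simp only [shiftU, shiftV, ← hn, hF, OP_M_succ]
    have hk := Nat.mod_lt k hN
    have h2 : (j - σ.M n + k) % σ.N n = (j - σ.M n + k % σ.N n) % σ.N n := by simp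
    rw [h2]
    split_ifs with h
    · rw [add_zero, Nat.mod_eq_of_lt (show j - σ.M n + k % σ.N n < σ.N n by omega)]
      congr 1; omega
    · rw [zero_add, Nat.mod_eq_sub_mod (show j - σ.M n + k % σ.N n ≥ σ.N n by omega),
        Nat.mod_eq_of_lt (show j - σ.M n + k % σ.N n - σ.N n < σ.N n by omega)]
      congr 1; omega
  simp only [h1]
  rw [periodic_sum_mul (fun k => F (j - σ.M n + k)) (σ.N n)
    (fun k => by rw [← add_assoc]; exact hFp _), periodic_sum_shift F (σ.N n) hFp,
    Pavg_apply σ f (OPidx_mem σ j), ← hn]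
  have h2 : ∑ i ∈ σ.part n, f i = ∑ k ∈ Finset.range (σ.N n), F k := by
    rw [OP_part_eq, Finset.sum_Ico_eq_sum_range, OP_M_succ, Nat.add_sub_cancel_left]
    refine Finset.sum_congr rfl fun k hk => ?_
    simp only [hF]
    rw [Nat.mod_eq_of_lt (Finset.mem_range.mp hk)]
  rw [h2]
  have : (σ.N n : ℝ) ≠ 0 := by positivity
  push_cast
  field_simp

lemma Pavg_supp (σ : OrderedPartition) {f : ℕ → ℝ} {r : ℕ}
    (hf : ∀ j, σ.M r ≤ j → f j = 0) : ∀ j, σ.M r ≤ j → σ.Pavg f j = 0 := by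
  intro j hj
  rw [Pavg_apply σ f (OPidx_mem σ j), Finset.sum_eq_zero, zero_div]
  intro i hi
  rw [OP_part_eq, Finset.mem_Ico] at hi
  exact hf i ((OP_M_mono σ (OPidx_ge σ hj)).trans hi.1)

lemma Pavg_nrm (S : SubsymmetricSpace) (σ : OrderedPartition) {f : ℕ → ℝ} {r : ℕ}
    (hf : ∀ j, σ.M r ≤ j → f j = 0) : S.nrm (σ.Pavg f) ≤ 2 * S.nrm f := by
  set L := ∏ n ∈ Finset.range r, σ.N n with hL
  have hL0 : 0 < L := Finset.prod_pos fun n _ => OP_N_pos σ n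
  have hLr : (0 : ℝ) < L := by exact_mod_cast hL0
  set c : ℕ → ℕ → ℕ := fun k n => k % σ.N n with hc
  have hcl : ∀ k n, c k n ≤ σ.N n := fun k n => (Nat.mod_lt k (OP_N_pos σ n)).le
  have e : (L : ℝ) • σ.Pavg f =
      ∑ k ∈ Finset.range L, (shiftU σ (c k) f + shiftV σ (c k) f) := by
    funext j
    simp only [Pi.smul_apply, Finset.sum_apply, Pi.add_apply, smul_eq_mul]
    rcases Nat.lt_or_ge j (σ.M r) with h | h
    · rw [shift_sum σ f j L _ hL0]
      apply Finset.dvd_prod_of_mem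
      rw [Finset.mem_range]
      by_contra h'
      have h1 : σ.M r ≤ σ.M (OPidx σ j) := OP_M_mono σ (by omega)
      have := OPidx_spec σ j
      omega
    · rw [Pavg_supp σ hf j h, mul_zero, Finset.sum_eq_zero]
      intro k _
      rw [shiftU_supp σ _ hf j h, shiftV_supp σ _ hf j h, add_zero]
  have hU : ∀ k, S.mem (shiftU σ (c k) f) := fun k => mem_fin S (shiftU_supp σ _ hf)
  have hV : ∀ k, S.mem (shiftV σ (c k) f) := fun k => mem_fin S (shiftV_supp σ _ hf)
  have h1 : S.nrm ((L : ℝ) • σ.Pavg f) ≤ ∑ k ∈ Finset.range L, (2 * S.nrm f) := by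
    rw [e]
    refine (nrm_sum_le S _ _ fun k _ => S.add_mem (hU k) (hV k)).trans ?_
    refine Finset.sum_le_sum fun k _ => ?_
    have := S.nrm_triangle (hU k) (hV k)
    have a := shiftU_nrm S σ (c k) (hcl k) hf
    have b := shiftV_nrm S σ (c k) (hcl k) hf
    linarith
  rw [S.nrm_smul, Finset.sum_const, Finset.card_range, nsmul_eq_mul, abs_of_pos hLr] at h1
  exact le_of_mul_le_mul_left h1 hLr

/-! ### Quasi-norm facts -/

section QB

variable {Z : Type*} [AddCommGroup Z] [Module ℝ Z] (B : QuasiBanach Z) (b : QBasis B)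

lemma QB_q_zero : B.q 0 = 0 := (B.q_eq_zero_iff 0).mpr rfl

lemma QB_q_sum (m : ℕ) (u : ℕ → Z) :
    B.q (∑ n ∈ Finset.range m, u n) ≤ B.kappa ^ m * ∑ n ∈ Finset.range m, B.q (u n) := by
  have hk := B.one_le_kappa
  induction m with
  | zero => simp [QB_q_zero]
  | succ m ih =>
    rw [Finset.sum_range_succ, Finset.sum_range_succ]
    refine (B.q_triangle _ _).trans ?_
    have h1 : B.q (u m) ≤ B.kappa ^ m * B.q (u m) :=
      le_mul_of_one_le_left (B.q_nonneg _) (one_le_pow₀ hk)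
    calc _ ≤ B.kappa * (B.kappa ^ m * ∑ n ∈ Finset.range m, B.q (u n)
          + B.kappa ^ m * B.q (u m)) := by gcongr
      _ = _ := by ring

/-- Finite linear combination of the first `m` basis vectors. -/
def comb {B : QuasiBanach Z} (b : QBasis B) (m : ℕ) (a : ℕ → ℝ) : Z :=
  ∑ n ∈ Finset.range m, a n • b.vec n

lemma comb_add (m : ℕ) (a c : ℕ → ℝ) :
    comb b m (fun n => a n + c n) = comb b m a + comb b m c := by
  simp [comb, add_smul, Finset.sum_add_distrib]

lemma comb_smul (m : ℕ) (t : ℝ) (a : ℕ → ℝ) :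
    comb b m (fun n => t * a n) = t • comb b m a := by
  simp [comb, mul_smul, Finset.smul_sum]

lemma comb_congr (m : ℕ) {a c : ℕ → ℝ} (h : ∀ n < m, a n = c n) : comb b m a = comb b m c :=
  Finset.sum_congr rfl fun n hn => by rw [h n (Finset.mem_range.mp hn)]

lemma coord_comb (m : ℕ) (a : ℕ → ℝ) (k : ℕ) :
    b.coord k (comb b m a) = if k < m then a k else 0 := by
  induction m with
  | zero =>
    have := b.coord_smul k 0 0 trivial
    simpa [comb] using this
  | succ m ih =>
    have : comb b (m + 1) a = comb b m a + a m • b.vec m := by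
      simp [comb, Finset.sum_range_succ]
    rw [this, b.coord_add k _ _ trivial trivial, ih, b.coord_smul k _ _ trivial, b.biorth]
    rcases lt_trichotomy k m with h | h | h
    · simp [h, h.ne, Nat.lt_succ_of_lt h]
    · simp [h]
    · have h1 : ¬ k < m := by omega
      have h2 : ¬ k < m + 1 := by omega
      simp [h.ne', h1, h2]

lemma proj_comb (m : ℕ) (a : ℕ → ℝ) (A : Finset ℕ) :
    b.toBioSystem.proj A (comb b m a) = comb b m (fun n => if n ∈ A then a n else 0) := by
  unfold BioSystem.proj
  simp only [coord_comb]
  unfold comb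
  simp only [ite_smul, zero_smul]
  rw [← Finset.sum_filter, ← Finset.sum_filter]
  refine Finset.sum_congr ?_ fun _ _ => rfl
  ext n
  simp [and_comm]

lemma comb_dom (m : ℕ) : ∃ K : ℝ, 0 ≤ K ∧ ∀ c a : ℕ → ℝ, (∀ n < m, |c n| ≤ |a n|) →
    B.q (comb b m c) ≤ K * B.q (comb b m a) := by
  have hk := B.one_le_kappa
  choose C hC using b.coord_bdd
  refine ⟨B.kappa ^ m * ∑ n ∈ Finset.range m, |C n| * B.q (b.vec n), ?_, ?_⟩
  · have : 0 ≤ B.kappa ^ m := by positivity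
    exact mul_nonneg this (Finset.sum_nonneg fun n _ => mul_nonneg (abs_nonneg _) (B.q_nonneg _))
  intro c a h
  refine (QB_q_sum B m _).trans ?_
  rw [mul_assoc]
  gcongr
  rw [Finset.sum_mul]
  refine Finset.sum_le_sum fun n hn => ?_
  have hn' := Finset.mem_range.mp hn
  rw [B.q_smul]
  have h1 := hC n (comb b m a) trivial
  rw [coord_comb, if_pos hn'] at h1
  have h2 : |c n| ≤ |C n| * B.q (comb b m a) :=
    ((h n hn').trans h1).trans (mul_le_mul_of_nonneg_right (le_abs_self _) (B.q_nonneg _))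
  calc |c n| * B.q (b.vec n) ≤ (|C n| * B.q (comb b m a)) * B.q (b.vec n) :=
        mul_le_mul_of_nonneg_right h2 (B.q_nonneg _)
    _ = _ := by ring

lemma ktilde_bdd (m : ℕ) : BddAbove {t : ℝ | ∃ (A : Finset ℕ) (a : ℕ → ℝ),
    B.q (∑ n ∈ Finset.range m, a n • b.vec n) ≤ 1 ∧
    t = B.q (b.toBioSystem.proj A (∑ n ∈ Finset.range m, a n • b.vec n))} := by
  obtain ⟨K, hK0, hK⟩ := comb_dom B b m
  refine ⟨K, ?_⟩
  rintro t ⟨A, a, ha, rfl⟩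
  change B.q (b.toBioSystem.proj A (comb b m a)) ≤ K
  rw [proj_comb]
  refine (hK _ a ?_).trans (mul_le_of_le_one_right hK0 ha)
  intro n _
  split_ifs <;> simp

lemma ktilde_spec1 (m : ℕ) (A : Finset ℕ) (a : ℕ → ℝ) (ha : B.q (comb b m a) ≤ 1) :
    B.q (comb b m (fun n => if n ∈ A then a n else 0)) ≤ b.toBioSystem.ktilde m := by
  rw [← proj_comb]
  exact le_csSup (ktilde_bdd B b m) ⟨A, a, ha, rfl⟩

lemma ktilde_nonneg (m : ℕ) : 0 ≤ b.toBioSystem.ktilde m := by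
  have := ktilde_spec1 B b m ∅ (fun _ => 0) (by simp [comb, QB_q_zero])
  exact (B.q_nonneg _).trans this

lemma ktilde_spec (m : ℕ) (A : Finset ℕ) (a : ℕ → ℝ) :
    B.q (comb b m (fun n => if n ∈ A then a n else 0)) ≤
      b.toBioSystem.ktilde m * B.q (comb b m a) := by
  rcases (B.q_nonneg (comb b m a)).eq_or_lt with h | h
  · obtain ⟨K, hK0, hK⟩ := comb_dom B b m
    have := hK (fun n => if n ∈ A then a n else 0) a (by intro n _; split_ifs <;> simp)
    rw [← h] at this ⊢
    simpa using this
  · set t := (B.q (comb b m a))⁻¹ with ht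
    have htpos : 0 < t := inv_pos.mpr h
    have h1 := ktilde_spec1 B b m A (fun n => t * a n)
      (by rw [comb_smul, B.q_smul, abs_of_pos htpos, ht, inv_mul_cancel₀ h.ne'])
    have h2 : (fun n => if n ∈ A then t * a n else 0)
        = fun n => t * (if n ∈ A then a n else 0) := by
      funext n; split_ifs <;> simp
    rw [h2, comb_smul, B.q_smul, abs_of_pos htpos, ht, inv_mul_le_iff₀ h] at h1
    linarith

lemma ktilde_le (m : ℕ) (K : ℝ)
    (h : ∀ (A : Finset ℕ) (a : ℕ → ℝ), B.q (comb b m a) ≤ 1 →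
      B.q (comb b m (fun n => if n ∈ A then a n else 0)) ≤ K) : b.toBioSystem.ktilde m ≤ K := by
  refine csSup_le ⟨_, ∅, fun _ => 0, by simp [QB_q_zero], rfl⟩ ?_
  rintro t ⟨A, a, ha, rfl⟩
  change B.q (b.toBioSystem.proj A (comb b m a)) ≤ K
  rw [proj_comb]
  exact h A a ha

lemma digits_bound (d₀ : ℕ) : ∃ D : ℝ, 0 ≤ D ∧ ∀ (m : ℕ) (a : ℕ → ℝ) (d : ℕ → ℕ),
    (∀ n, d n ≤ d₀) → B.q (comb b m (fun n => (d n : ℝ) * a n)) ≤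
      D * (b.toBioSystem.ktilde m * B.q (comb b m a)) := by
  have hk := B.one_le_kappa
  induction d₀ with
  | zero =>
    refine ⟨0, le_rfl, fun m a d hd => ?_⟩
    have : ∀ n, d n = 0 := fun n => Nat.le_zero.mp (hd n)
    simp [this, comb, QB_q_zero]
  | succ d₀ ih =>
    obtain ⟨D, hD0, hD⟩ := ih
    refine ⟨B.kappa * (D + 1), by positivity, fun m a d hd => ?_⟩
    set A := (Finset.range m).filter (fun n => d n = d₀ + 1) with hA
    have e : comb b m (fun n => (d n : ℝ) * a n) =
        comb b m (fun n => ((min (d n) d₀ : ℕ) : ℝ) * a n) +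
        comb b m (fun n => if n ∈ A then a n else 0) := by
      rw [← comb_add]
      refine comb_congr B b m fun n hn => ?_
      have hdn := hd n
      by_cases h : d n = d₀ + 1
      · simp [hA, h, hn]; ring
      · have h3 : min (d n) d₀ = d n := min_eq_left (by omega)
        simp [hA, h, h3]
    rw [e]
    refine (B.q_triangle _ _).trans ?_
    have h1 := hD m a (fun n => min (d n) d₀) (fun n => min_le_right _ _)
    have h2 := ktilde_spec B b m A a
    calc _ ≤ B.kappa * (D * (b.toBioSystem.ktilde m * B.q (comb b m a)) +
          b.toBioSystem.ktilde m * B.q (comb b m a)) := by gcongr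
      _ = _ := by ring

lemma mult_bound : ∃ D : ℝ, 0 ≤ D ∧ ∀ (m : ℕ) (a l : ℕ → ℝ),
    (∀ n, 0 ≤ l n ∧ l n ≤ 1) → B.q (comb b m (fun n => l n * a n)) ≤
      D * (b.toBioSystem.ktilde m * B.q (comb b m a)) := by
  have hk := B.one_le_kappa
  obtain ⟨t, ht⟩ := exists_nat_ge (2 * B.kappa)
  have htpos : (0 : ℝ) < t := by linarith
  obtain ⟨D, hD0, hD⟩ := digits_bound B b t
  refine ⟨D, hD0, fun m a => ?_⟩
  set R := D * (b.toBioSystem.ktilde m * B.q (comb b m a)) with hR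
  set T : Set ℝ := {x | ∃ l : ℕ → ℝ, (∀ n, 0 ≤ l n ∧ l n ≤ 1) ∧
    x = B.q (comb b m (fun n => l n * a n))} with hT
  have hbdd : BddAbove T := by
    obtain ⟨K, hK0, hK⟩ := comb_dom B b m
    refine ⟨K * B.q (comb b m a), ?_⟩
    rintro x ⟨l, hl, rfl⟩
    refine hK _ a fun n _ => ?_
    rw [abs_mul, abs_of_nonneg (hl n).1]
    exact mul_le_of_le_one_left (abs_nonneg _) (hl n).2
  have hne : T.Nonempty := ⟨_, fun _ => 0, by simp, rfl⟩
  have hstep : ∀ x ∈ T, x ≤ (R + sSup T) / 2 := by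
    rintro x ⟨l, hl, rfl⟩
    set d : ℕ → ℕ := fun n => ⌊(t : ℝ) * l n⌋₊ with hd
    set l' : ℕ → ℝ := fun n => t * l n - d n with hl'
    have hl'01 : ∀ n, 0 ≤ l' n ∧ l' n ≤ 1 := by
      intro n
      have h0 : 0 ≤ (t : ℝ) * l n := mul_nonneg htpos.le (hl n).1
      have h1 := Nat.floor_le h0
      have h2 := Nat.lt_floor_add_one ((t : ℝ) * l n)
      simp only [hl', hd]
      constructor <;> linarith
    have hdle : ∀ n, d n ≤ t := by
      intro n
      refine Nat.floor_le_of_le ?_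
      exact mul_le_of_le_one_right htpos.le (hl n).2
    have e : comb b m (fun n => l n * a n) = (t : ℝ)⁻¹ •
        (comb b m (fun n => (d n : ℝ) * a n) + comb b m (fun n => l' n * a n)) := by
      rw [← comb_add, ← comb_smul]
      refine comb_congr B b m fun n _ => ?_
      simp only [hl']
      field_simp
      ring
    have h1 : B.q (comb b m (fun n => (d n : ℝ) * a n)) ≤ R := hD m a d hdle
    have h2 : B.q (comb b m (fun n => l' n * a n)) ≤ sSup T := le_csSup hbdd ⟨l', hl'01, rfl⟩
    have h3 := B.q_triangle (comb b m (fun n => (d n : ℝ) * a n)) (comb b m (fun n => l' n * a n))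
    rw [e, B.q_smul, abs_of_pos (inv_pos.mpr htpos), inv_mul_le_iff₀ htpos]
    have h4 : 0 ≤ R + sSup T := by
      have := B.q_nonneg (comb b m (fun n => (d n : ℝ) * a n))
      have := B.q_nonneg (comb b m (fun n => l' n * a n))
      linarith
    calc _ ≤ B.kappa * (R + sSup T) := h3.trans (by gcongr)
      _ ≤ (t / 2) * (R + sSup T) := by gcongr; linarith
      _ = _ := by ring
  have hsup : sSup T ≤ (R + sSup T) / 2 := csSup_le hne hstep
  intro l hl
  have : B.q (comb b m (fun n => l n * a n)) ≤ sSup T := le_csSup hbdd ⟨l, hl, rfl⟩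
  linarith

lemma one_le_ktilde {r : ℕ} (hr : 0 < r) (h0 : 0 < B.q (b.vec 0)) :
    1 ≤ b.toBioSystem.ktilde r := by
  have h := ktilde_spec B b r {0} (fun n => if n = 0 then 1 else 0)
  have e : comb b r (fun n => if n = 0 then 1 else 0) = b.vec 0 := by
    simp [comb, ite_smul, hr.ne']
  have e2 : (fun n => if n ∈ ({0} : Finset ℕ) then (if n = 0 then (1 : ℝ) else 0) else 0)
      = fun n => if n = 0 then 1 else 0 := by
    funext n; by_cases h : n = 0 <;> simp [h]
  rw [e2, e] at h
  exact le_of_mul_le_mul_right (by simpa using h) h0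

lemma eta_spec (s : ℝ) (hs : 1 ≤ s) (r : ℕ) (a : ℕ → ℝ) :
    (∑ n ∈ Finset.range r, |a n| ^ s) ^ (1 / s) ≤ etaParam B b s r * B.q (comb b r a) := by
  have hs0 : 0 < s := by linarith
  choose C hC using b.coord_bdd
  have hne : {C : ℝ | 0 ≤ C ∧ ∀ a : ℕ → ℝ, (∑ n ∈ Finset.range r, |a n| ^ s) ^ (1 / s) ≤
      C * B.q (∑ n ∈ Finset.range r, a n • b.vec n)}.Nonempty := by
    refine ⟨(∑ n ∈ Finset.range r, |C n| ^ s) ^ (1 / s), by positivity, fun a => ?_⟩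
    have hq := B.q_nonneg (comb b r a)
    have h1 : ∀ n ∈ Finset.range r, |a n| ^ s ≤ |C n| ^ s * B.q (comb b r a) ^ s := by
      intro n hn
      rw [← Real.mul_rpow (abs_nonneg _) hq]
      refine Real.rpow_le_rpow (abs_nonneg _) ?_ hs0.le
      have h1 := hC n (comb b r a) trivial
      rw [coord_comb, if_pos (Finset.mem_range.mp hn)] at h1
      exact h1.trans (mul_le_mul_of_nonneg_right (le_abs_self _) hq)
    have h2 := Finset.sum_le_sum h1
    rw [← Finset.sum_mul] at h2
    have h3 := Real.rpow_le_rpow (by positivity) h2 (show 0 ≤ 1 / s by positivity)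
    rw [Real.mul_rpow (by positivity) (by positivity), ← Real.rpow_mul hq,
      mul_one_div_cancel hs0.ne', Real.rpow_one] at h3
    exact h3
  rcases (B.q_nonneg (comb b r a)).eq_or_lt with h | h
  · obtain ⟨K, _, hK⟩ := hne
    have := hK a
    change _ ≤ K * B.q (comb b r a) at this
    rw [← h] at this ⊢
    simpa using this
  · rw [← div_le_iff₀ h]
    refine le_csInf hne ?_
    rintro K ⟨_, hK⟩
    rw [div_le_iff₀ h]
    exact hK a

lemma estNorm_nonneg (q : ℝ≥0∞) {ι : Type*} (J : Finset ι) (g : ι → ℝ) : 0 ≤ estNorm q J g := by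
  unfold estNorm
  split_ifs
  · positivity
  · positivity

lemma le_estNorm (q : ℝ≥0∞) (hq : 0 < q) {ι : Type*} (J : Finset ι) (g : ι → ℝ) (i : ι)
    (hi : i ∈ J) : |g i| ≤ estNorm q J g := by
  unfold estNorm
  split_ifs with h
  · have h1 : Real.toNNReal |g i| ≤ J.sup fun i => Real.toNNReal |g i| :=
      Finset.le_sup (f := fun i => Real.toNNReal |g i|) hi
    have h2 : ((Real.toNNReal |g i| : NNReal) : ℝ) ≤
      ((J.sup fun i => Real.toNNReal |g i| : NNReal) : ℝ) := by exact_mod_cast h1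
    rwa [Real.coe_toNNReal _ (abs_nonneg _)] at h2
  · have hq0 : 0 < q.toReal := ENNReal.toReal_pos hq.ne' h
    have h1 : |g i| ^ q.toReal ≤ ∑ i ∈ J, |g i| ^ q.toReal :=
      Finset.single_le_sum (f := fun i => |g i| ^ q.toReal) (fun i _ => by positivity) hi
    have h3 := Real.rpow_le_rpow (by positivity) h1 (show 0 ≤ 1 / q.toReal by positivity)
    rwa [← Real.rpow_mul (abs_nonneg _), mul_one_div_cancel hq0.ne', Real.rpow_one] at h3

lemma beta_spec (q : ℝ≥0∞) (hq : 0 < q) (r : ℕ) (a : ℕ → ℝ) :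
    B.q (comb b r a) ≤ betaParam B b q r * estNorm q (Finset.range r) a := by
  have hk := B.one_le_kappa
  have hne : {C : ℝ | 0 ≤ C ∧ ∀ a : ℕ → ℝ,
      B.q (∑ n ∈ Finset.range r, a n • b.vec n) ≤ C * estNorm q (Finset.range r) a}.Nonempty := by
    refine ⟨B.kappa ^ r * ∑ n ∈ Finset.range r, B.q (b.vec n), ?_, fun a => ?_⟩
    · have : 0 ≤ B.kappa ^ r := by positivity
      exact mul_nonneg this (Finset.sum_nonneg fun n _ => B.q_nonneg _)
    · refine (QB_q_sum B r _).trans ?_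
      rw [mul_assoc, Finset.sum_mul]
      gcongr with n hn
      rw [B.q_smul, mul_comm]
      exact mul_le_mul_of_nonneg_left (le_estNorm q hq _ a n hn) (B.q_nonneg _)
  rcases (estNorm_nonneg q (Finset.range r) a).eq_or_lt with h | h
  · obtain ⟨K, _, hK⟩ := hne
    have := hK a
    change B.q (comb b r a) ≤ _ at this
    rw [← h] at this ⊢
    simpa using this
  · rw [← div_le_iff₀ h]
    refine le_csInf hne ?_
    rintro K ⟨_, hK⟩
    rw [div_le_iff₀ h]
    exact hK a

lemma eta_nonneg (s : ℝ) (r : ℕ) : 0 ≤ etaParam B b s r :=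
  Real.sInf_nonneg fun _ h => h.1

lemma beta_nonneg (q : ℝ≥0∞) (r : ℕ) : 0 ≤ betaParam B b q r :=
  Real.sInf_nonneg fun _ h => h.1

end QB

/-! ### Blocks -/

lemma Lam_pos (S : SubsymmetricSpace) {m : ℕ} (hm : 0 < m) : 0 < S.Lam m := by
  refine lt_of_le_of_ne (S.nrm_nonneg _) fun h => ?_
  have h1 : S.mem (indic m) := mem_fin S (m := m) (fun j hj => by simp [indic, hj])
  have h2 := (S.nrm_eq_zero h1).mp h.symm
  have := congrFun h2 0
  simp [indic, hm] at this

def bump (σ : OrderedPartition) (f : ℕ → ℝ) (n : ℕ) : ℕ → ℝ :=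
  fun j => if j ∈ σ.part n then (∑ i ∈ σ.part n, f i) / (σ.N n : ℝ) else 0

lemma bump_supp (σ : OrderedPartition) (f : ℕ → ℝ) (n : ℕ) :
    ∀ j, σ.M (n + 1) ≤ j → bump σ f n j = 0 := by
  intro j hj
  unfold bump
  rw [if_neg]
  rw [OP_part_eq, Finset.mem_Ico]
  omega

lemma nrm_bump (S : SubsymmetricSpace) (σ : OrderedPartition) (f : ℕ → ℝ) (n : ℕ) :
    S.nrm (bump σ f n) = |vstar S σ n f| := by
  set w : ℕ → ℝ := fun j => if j ∈ σ.part n then 1 else 0 with hw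
  have hwn : S.nrm w = S.Lam (σ.N n) := by
    have hmono : StrictMono (fun j => j + σ.M n) := fun i j h => by simpa using h
    have hm : S.mem (indic (σ.N n)) :=
      mem_fin S (m := σ.N n) (fun j hj => by simp [indic, hj])
    have h1 := (S.subsym hm (fun _ => 1) (by simp) _ hmono).2
    have h2 : spread (fun j => j + σ.M n) (fun _ => 1) (indic (σ.N n)) = w := by
      funext x
      by_cases hx : σ.M n ≤ x
      · obtain ⟨k, rfl⟩ := Nat.exists_eq_add_of_le' hx
        have h3 := spread_apply hmono (fun _ => 1) (indic (σ.N n)) k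
        rw [h3]
        simp only [hw, indic, OP_part_eq, Finset.mem_Ico, OP_M_succ, one_mul]
        congr 1
        simp only [eq_iff_iff]
        omega
      · rw [spread_notin _ _ (by intro k; omega)]
        simp [hw, OP_part_eq, hx]
    rw [h2] at h1
    exact h1
  have e : bump σ f n = ((∑ i ∈ σ.part n, f i) / (σ.N n : ℝ)) • w := by
    funext j
    simp only [bump, hw, Pi.smul_apply, smul_eq_mul]
    split_ifs <;> simp
  have hL0 : 0 ≤ S.Lam (σ.N n) := S.nrm_nonneg _
  have h4 : vstar S σ n f = ((∑ i ∈ σ.part n, f i) / (σ.N n : ℝ)) * S.Lam (σ.N n) := by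
    rw [vstar]; ring
  rw [e, S.nrm_smul, hwn, h4, abs_mul, abs_of_nonneg hL0]

lemma Pavg_eq_sum (σ : OrderedPartition) {f : ℕ → ℝ} {r : ℕ}
    (hf : ∀ j, σ.M r ≤ j → f j = 0) : σ.Pavg f = ∑ n ∈ Finset.range r, bump σ f n := by
  funext j
  rw [Finset.sum_apply]
  have hj := OPidx_mem σ j
  have key : ∀ n, bump σ f n j = if n = OPidx σ j then σ.Pavg f j else 0 := by
    intro n
    by_cases h : n = OPidx σ j
    · subst h
      rw [if_pos rfl, Pavg_apply σ f hj, bump, if_pos hj]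
    · rw [if_neg h, bump, if_neg fun h' => h (OP_uniq σ h' hj)]
  simp only [key, Finset.sum_ite_eq', Finset.mem_range]
  split_ifs with h
  · rfl
  · refine Pavg_supp σ hf j ?_
    exact (OP_M_mono σ (by omega)).trans (OPidx_spec σ j).1

lemma bump_disj (σ : OrderedPartition) (f : ℕ → ℝ) (J : Finset ℕ) : DisjFam (bump σ f) J := by
  intro i _ j _ hij k
  by_cases h : k ∈ σ.part i
  · right
    rw [bump, if_neg fun h' => hij (OP_uniq σ h h')]
  · left
    rw [bump, if_neg h]

lemma vstar_zero (S : SubsymmetricSpace) (σ : OrderedPartition) {f : ℕ → ℝ} {r : ℕ}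
    (hf : ∀ j, σ.M r ≤ j → f j = 0) {n : ℕ} (hn : r ≤ n) : vstar S σ n f = 0 := by
  rw [vstar, Finset.sum_eq_zero, mul_zero]
  intro i hi
  rw [OP_part_eq, Finset.mem_Ico] at hi
  exact hf i ((OP_M_mono σ hn).trans hi.1)

lemma Hmap_eq {Z : Type*} [AddCommGroup Z] [Module ℝ Z] (B : QuasiBanach Z) (b : QBasis B)
    (S : SubsymmetricSpace) (σ : OrderedPartition) {f : ℕ → ℝ} {r : ℕ}
    (hf : ∀ j, σ.M r ≤ j → f j = 0) :
    Hmap B b S σ f = comb b r (fun n => vstar S σ n f) := by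
  unfold Hmap comb
  refine finsum_eq_sum_of_support_subset _ ?_
  intro n hn
  rw [Finset.coe_range, Set.mem_Iio]
  by_contra h
  exact hn (by simp [vstar_zero S σ hf (not_lt.mp h)])

lemma vstar_add (S : SubsymmetricSpace) (σ : OrderedPartition) (f g : ℕ → ℝ) (n : ℕ) :
    vstar S σ n (f + g) = vstar S σ n f + vstar S σ n g := by
  simp [vstar, Finset.sum_add_distrib, mul_add]

/-- Combinations in the completion have the explicit norm. -/
lemma qY_comb {X : Type*} [AddCommGroup X] [Module ℝ X] (B : QuasiBanach X)
    (bX : QBasis B) (S : SubsymmetricSpace) (σ : OrderedPartition)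
    {Y : Type*} [AddCommGroup Y] [Module ℝ Y] (BY : QuasiBanach Y)
    (j : (ℕ →₀ ℝ) →ₗ[ℝ] Y)
    (hiso : ∀ f : ℕ →₀ ℝ, BY.q (j f) = YNorm B bX S σ ⇑f)
    (bY : QBasis BY) (huvs : ∀ n : ℕ, bY.vec n = j (Finsupp.single n 1))
    (m : ℕ) (a : ℕ → ℝ) :
    BY.q (comb bY m a) = YNorm B bX S σ (fun i => if i < m then a i else 0) := by
  set g : ℕ →₀ ℝ := ∑ n ∈ Finset.range m, a n • Finsupp.single n 1 with hg
  have h1 : comb bY m a = j g := by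
    rw [hg, map_sum]
    simp only [comb, huvs, map_smul]
  have h2 : ⇑g = fun i => if i < m then a i else 0 := by
    funext i
    rw [hg, Finsupp.finsetSum_apply]
    simp only [Finsupp.smul_apply, Finsupp.single_apply, smul_eq_mul, mul_ite, mul_one, mul_zero,
      Finset.sum_ite_eq', Finset.mem_range]
  rw [h1, hiso, h2]

lemma restr_supp {f : ℕ → ℝ} {m : ℕ} (A : Finset ℕ) (hf : ∀ j, m ≤ j → f j = 0) :
    ∀ j, m ≤ j → (if j ∈ A then f j else 0) = 0 := by
  intro j hj
  rw [hf j hj, ite_self]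

/-- Step function associated with coefficients `a`. -/
def stepFn (S : SubsymmetricSpace) (σ : OrderedPartition) (a : ℕ → ℝ) : ℕ → ℝ :=
  fun j => a (OPidx σ j) / S.Lam (σ.N (OPidx σ j))

lemma YNorm_step {X : Type*} [AddCommGroup X] [Module ℝ X] (B : QuasiBanach X)
    (bX : QBasis B) (S : SubsymmetricSpace) (σ : OrderedPartition) (r : ℕ) (a : ℕ → ℝ) :
    YNorm B bX S σ (fun i => if i < σ.M r then stepFn S σ a i else 0) = B.q (comb bX r a) := by
  set f : ℕ → ℝ := fun i => if i < σ.M r then stepFn S σ a i else 0 with hf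
  have hfs : ∀ j, σ.M r ≤ j → f j = 0 := by
    intro j hj
    simp [hf, hj]
  have hsum : ∀ n < r, ∀ i ∈ σ.part n, f i = a n / S.Lam (σ.N n) := by
    intro n hn i hi
    have hi' := hi
    rw [OP_part_eq, Finset.mem_Ico] at hi'
    have h1 : σ.M (n + 1) ≤ σ.M r := OP_M_mono σ hn
    simp only [hf]
    rw [if_pos (by omega), stepFn, OP_uniq σ (OPidx_mem σ i) hi]
  have hs : ∀ n < r, ∑ i ∈ σ.part n, f i = σ.N n * (a n / S.Lam (σ.N n)) := by
    intro n hn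
    rw [Finset.sum_congr rfl (hsum n hn), Finset.sum_const, nsmul_eq_mul, OrderedPartition.N]
  have hP : σ.Pavg f = f := by
    funext j
    rcases Nat.lt_or_ge j (σ.M r) with h | h
    · have hr : OPidx σ j < r := by
        by_contra h'
        have := OP_M_mono σ (not_lt.mp h')
        have := OPidx_spec σ j
        omega
      have hN : (σ.N (OPidx σ j) : ℝ) ≠ 0 := by
        have := OP_N_pos σ (OPidx σ j)
        positivity
      rw [Pavg_apply σ f (OPidx_mem σ j), hs _ hr, hsum _ hr _ (OPidx_mem σ j),
        mul_div_cancel_left₀ _ hN]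
    · rw [Pavg_supp σ hfs j h, hfs j h]
  have hQ : σ.Qavg f = 0 := by rw [OrderedPartition.Qavg, hP, sub_self]
  rw [YNorm, hQ, nrm_zero', zero_add, Hmap_eq B bX S σ hfs]
  congr 1
  refine comb_congr B bX r fun n hn => ?_
  have hN : (σ.N n : ℝ) ≠ 0 := by
    have := OP_N_pos σ n
    positivity
  have hL := (Lam_pos S (OP_N_pos σ n)).ne'
  rw [vstar, hs n hn]
  field_simp

/-- The key estimate. -/
lemma key_bound {X : Type*} [AddCommGroup X] [Module ℝ X] (B : QuasiBanach X)
    (bX : QBasis B) (S : SubsymmetricSpace) (σ : OrderedPartition)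
    (s : ℝ) (hs : 1 ≤ s) (hupper : S.UpperEst s)
    (q : ℝ≥0∞) (hq : 0 < q) (hlower : S.LowerEstE q) :
    ∃ C : ℝ, 0 ≤ C ∧ ∀ (r : ℕ) (A : Finset ℕ) (f : ℕ → ℝ), (∀ j, σ.M r ≤ j → f j = 0) →
      YNorm B bX S σ f ≤ 1 →
      YNorm B bX S σ (fun j => if j ∈ A then f j else 0) ≤
        C * (1 + bX.toBioSystem.ktilde r + etaParam B bX s r + betaParam B bX q r) := by
  have hk := B.one_le_kappa
  obtain ⟨Cu, hCu⟩ := hupper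
  obtain ⟨Cl, hCl⟩ := hlower
  obtain ⟨D, hD0, hD⟩ := mult_bound B bX
  refine ⟨3 + 3 * |Cu| + B.kappa * (2 * |Cl| + D), by positivity, fun r A f hf hf1 => ?_⟩
  set K := bX.toBioSystem.ktilde r with hK
  set η := etaParam B bX s r with hη
  set β := betaParam B bX q r with hβ
  have hK0 : 0 ≤ K := ktilde_nonneg B bX r
  have hη0 : 0 ≤ η := eta_nonneg B bX s r
  have hβ0 : 0 ≤ β := beta_nonneg B bX q r
  set g := σ.Qavg f with hg
  set p := σ.Pavg f with hp
  have hps : ∀ j, σ.M r ≤ j → p j = 0 := Pavg_supp σ hf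
  have hgs : ∀ j, σ.M r ≤ j → g j = 0 := by
    intro j hj
    change f j - p j = 0
    rw [hf j hj, hps j hj, sub_zero]
  have hfgp : ∀ j, f j = g j + p j := by
    intro j
    change f j = f j - p j + p j
    ring
  set u : ℕ → ℝ := fun n => vstar S σ n f with hu
  have hH : Hmap B bX S σ f = comb bX r u := Hmap_eq B bX S σ hf
  rw [YNorm, hH] at hf1
  have hg1 : S.nrm g ≤ 1 := by have := B.q_nonneg (comb bX r u); linarith
  have hu1 : B.q (comb bX r u) ≤ 1 := by have := S.nrm_nonneg g; linarith
  have hgm : S.mem g := mem_fin S hgs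
  have hpm : S.mem p := mem_fin S hps
  -- norm of p
  have hpn : S.nrm p ≤ |Cu| * η := by
    have h1 := hCu (Finset.range r) (bump σ f) (fun i _ => mem_fin S (bump_supp σ f i))
      (bump_disj σ f _)
    rw [← Pavg_eq_sum σ hf] at h1
    simp only [nrm_bump] at h1
    have h2 := eta_spec B bX s hs r u
    have h3 : (∑ n ∈ Finset.range r, |u n| ^ s) ^ (1 / s) ≤ η :=
      h2.trans (mul_le_of_le_one_right hη0 hu1)
    have h4 : 0 ≤ (∑ n ∈ Finset.range r, |u n| ^ s) ^ (1 / s) := by positivity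
    calc S.nrm p ≤ Cu * (∑ n ∈ Finset.range r, |u n| ^ s) ^ (1 / s) := h1
      _ ≤ |Cu| * (∑ n ∈ Finset.range r, |u n| ^ s) ^ (1 / s) := by
        gcongr; exact le_abs_self _
      _ ≤ |Cu| * η := by gcongr
  set fA : ℕ → ℝ := fun j => if j ∈ A then f j else 0 with hfA
  set gA : ℕ → ℝ := fun j => if j ∈ A then g j else 0 with hgA
  set pA : ℕ → ℝ := fun j => if j ∈ A then p j else 0 with hpA
  have hfAs : ∀ j, σ.M r ≤ j → fA j = 0 := restr_supp A hf
  have hgAs : ∀ j, σ.M r ≤ j → gA j = 0 := restr_supp A hgs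
  have hgAn : S.nrm gA ≤ 1 := (nrm_restrict S hgm (fun j => j ∈ A)).trans hg1
  -- the Q part
  have hfm : S.mem f := mem_fin S hf
  have hfn : S.nrm f ≤ 1 + |Cu| * η := by
    have e : f = g + p := funext hfgp
    have := S.nrm_triangle hgm hpm
    rw [← e] at this
    linarith
  have hfAn : S.nrm fA ≤ 1 + |Cu| * η := (nrm_restrict S hfm (fun j => j ∈ A)).trans hfn
  have hQ : S.nrm (σ.Qavg fA) ≤ 3 * (1 + |Cu| * η) := by
    have e : σ.Qavg fA = fA + (-1 : ℝ) • σ.Pavg fA := by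
      rw [OrderedPartition.Qavg]; simp [sub_eq_add_neg]
    have hPm : S.mem (σ.Pavg fA) := mem_fin S (Pavg_supp σ hfAs)
    have h1 := S.nrm_triangle (mem_fin S hfAs) (S.smul_mem (-1) hPm)
    rw [← e, S.nrm_smul, abs_neg, abs_one, one_mul] at h1
    have h2 := Pavg_nrm S σ hfAs
    linarith
  -- the H part
  have hHA : Hmap B bX S σ fA = comb bX r (fun n => vstar S σ n gA)
      + comb bX r (fun n => vstar S σ n pA) := by
    rw [Hmap_eq B bX S σ hfAs, ← comb_add]
    refine comb_congr B bX r fun n _ => ?_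
    rw [← vstar_add]
    congr 1
    funext j
    simp only [hfA, hgA, hpA, Pi.add_apply]
    split_ifs
    · exact hfgp j
    · simp
  have hH1 : B.q (comb bX r (fun n => vstar S σ n gA)) ≤ 2 * |Cl| * β := by
    have h1 := beta_spec B bX q hq r (fun n => vstar S σ n gA)
    have h2 := hCl (Finset.range r) (bump σ gA) (fun i _ => mem_fin S (bump_supp σ gA i))
      (bump_disj σ gA _)
    rw [← Pavg_eq_sum σ hgAs] at h2
    simp only [nrm_bump] at h2
    have h3 : estNorm q (Finset.range r) (fun i => |vstar S σ i gA|) =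
        estNorm q (Finset.range r) (fun i => vstar S σ i gA) := by
      simp only [estNorm, abs_abs]
    rw [h3] at h2
    have h4 := Pavg_nrm S σ hgAs
    have h5 : estNorm q (Finset.range r) (fun i => vstar S σ i gA) ≤ |Cl| * 2 := by
      calc _ ≤ Cl * S.nrm (σ.Pavg gA) := h2
        _ ≤ |Cl| * S.nrm (σ.Pavg gA) :=
          mul_le_mul_of_nonneg_right (le_abs_self _) (S.nrm_nonneg _)
        _ ≤ |Cl| * 2 := by gcongr; linarith
    calc _ ≤ β * estNorm q (Finset.range r) (fun i => vstar S σ i gA) := h1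
      _ ≤ β * (|Cl| * 2) := by gcongr
      _ = _ := by ring
  have hH2 : B.q (comb bX r (fun n => vstar S σ n pA)) ≤ D * K := by
    set l : ℕ → ℝ := fun n => (((σ.part n).filter (fun j => j ∈ A)).card : ℝ) / σ.N n with hl
    have hl01 : ∀ n, 0 ≤ l n ∧ l n ≤ 1 := by
      intro n
      refine ⟨by simp only [hl]; positivity, ?_⟩
      simp only [hl]
      refine div_le_one_of_le₀ ?_ (by positivity)
      exact_mod_cast Finset.card_filter_le _ _
    have e : ∀ n, vstar S σ n pA = l n * u n := by
      intro n
      have h1 : ∑ j ∈ σ.part n, pA j = ((σ.part n).filter (fun j => j ∈ A)).card *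
          ((∑ i ∈ σ.part n, f i) / (σ.N n : ℝ)) := by
        simp only [hpA]
        rw [← Finset.sum_filter, Finset.sum_congr rfl
          (fun j hj => Pavg_apply σ f (Finset.mem_filter.mp hj).1), Finset.sum_const, nsmul_eq_mul]
      simp only [vstar, h1, hl, hu]
      ring
    have h1 := hD r u l hl01
    simp only [e]
    refine h1.trans ?_
    gcongr
    exact mul_le_of_le_one_right hK0 hu1
  have hHq : B.q (Hmap B bX S σ fA) ≤ B.kappa * (2 * |Cl| * β + D * K) := by
    rw [hHA]
    refine (B.q_triangle _ _).trans ?_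
    gcongr
  have hCu0 := abs_nonneg Cu
  have hCl0 := abs_nonneg Cl
  rw [YNorm]
  calc _ ≤ 3 * (1 + |Cu| * η) + B.kappa * (2 * |Cl| * β + D * K) := add_le_add hQ hHq
    _ ≤ 3 * (1 + K + η + β) + 3 * |Cu| * (1 + K + η + β)
        + B.kappa * (2 * |Cl| * (1 + K + η + β) + D * (1 + K + η + β)) := by
      have a1 : 3 * (1 : ℝ) ≤ 3 * (1 + K + η + β) := by linarith
      have a2 : 3 * |Cu| * η ≤ 3 * |Cu| * (1 + K + η + β) := by gcongr; linarith
      have a3 : B.kappa * (2 * |Cl| * β + D * K) ≤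
          B.kappa * (2 * |Cl| * (1 + K + η + β) + D * (1 + K + η + β)) := by
        gcongr <;> linarith
      linarith
    _ = _ := by ring

theorem statement14 {X : Type*} [AddCommGroup X] [Module ℝ X] (B : QuasiBanach X)
    (bX : QBasis B) (hsemi : bX.toBioSystem.SemiNormalized)
    (S : SubsymmetricSpace) (σ : OrderedPartition)
    (hLRP : LRP S.Lam) (hURP : URP S.Lam)
    (hMN : ∃ c : ℝ, ∀ r : ℕ, (σ.M r : ℝ) ≤ c * (σ.N r : ℝ))
    {Y : Type*} [AddCommGroup Y] [Module ℝ Y] (BY : QuasiBanach Y)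
    (j : (ℕ →₀ ℝ) →ₗ[ℝ] Y)
    (hiso : ∀ f : ℕ →₀ ℝ, BY.q (j f) = YNorm B bX S σ ⇑f)
    (hdense : ∀ y : Y, ∀ ε : ℝ, 0 < ε → ∃ f : ℕ →₀ ℝ, BY.q (y - j f) < ε)
    (bY : QBasis BY) (huvs : ∀ n : ℕ, bY.vec n = j (Finsupp.single n 1))
    (s : ℝ) (hs : 1 ≤ s) (hupper : S.UpperEst s)
    (q : ℝ≥0∞) (hq : 0 < q) (hlower : S.LowerEstE q) :
    (∀ r : ℕ, bX.toBioSystem.ktilde r ≤ bY.toBioSystem.ktilde (σ.M r)) ∧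
    ∃ C : ℝ, ∀ r : ℕ, bY.toBioSystem.ktilde (σ.M r) ≤
      C * max (bX.toBioSystem.ktilde r)
        (max (etaParam B bX s r) (betaParam B bX q r)) := by
  have hY := qY_comb B bX S σ BY j hiso bY huvs
  constructor
  · intro r
    refine ktilde_le B bX r _ fun A a ha => ?_
    set A' := (Finset.range (σ.M r)).filter (fun i => OPidx σ i ∈ A) with hA'
    have h1 := ktilde_spec1 BY bY (σ.M r) A' (stepFn S σ a) (by rw [hY, YNorm_step]; exact ha)
    rw [hY] at h1
    have e : (fun i => if i < σ.M r then (if i ∈ A' then stepFn S σ a i else 0) else 0) =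
        fun i => if i < σ.M r then stepFn S σ (fun n => if n ∈ A then a n else 0) i else 0 := by
      funext i
      by_cases hi : i < σ.M r
      · by_cases hA : OPidx σ i ∈ A <;> simp [hA', hi, hA, stepFn]
      · simp [hi]
    rw [e, YNorm_step] at h1
    exact h1
  · obtain ⟨C, hC0, hC⟩ := key_bound B bX S σ s hs hupper q hq hlower
    refine ⟨4 * C, fun r => ?_⟩
    have hK0 := ktilde_nonneg B bX r
    have hm1 := le_max_left (bX.toBioSystem.ktilde r)
      (max (etaParam B bX s r) (betaParam B bX q r))
    have hm2 := (le_max_left (etaParam B bX s r) (betaParam B bX q r)).trans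
      (le_max_right (bX.toBioSystem.ktilde r) _)
    have hm3 := (le_max_right (etaParam B bX s r) (betaParam B bX q r)).trans
      (le_max_right (bX.toBioSystem.ktilde r) _)
    set W := max (bX.toBioSystem.ktilde r) (max (etaParam B bX s r) (betaParam B bX q r)) with hW
    refine ktilde_le BY bY _ _ fun A a ha => ?_
    rcases Nat.eq_zero_or_pos r with hr | hr
    · subst hr
      have : σ.M 0 = 0 := by simp [OrderedPartition.M]
      rw [this]
      simp only [comb, Finset.range_zero, Finset.sum_empty, QB_q_zero]
      have : 0 ≤ W := hK0.trans hm1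
      positivity
    · obtain ⟨c, _, hc, hcv⟩ := hsemi
      have h1 := one_le_ktilde B bX hr (hc.trans_le (hcv 0).1)
      rw [hY] at ha ⊢
      have h2 := hC r A _ (fun i hi => by simp [hi]) ha
      have e : (fun i => if i < σ.M r then (if i ∈ A then a i else 0) else 0) =
          fun i => if i ∈ A then (if i < σ.M r then a i else 0) else 0 := by
        funext i
        split_ifs <;> rfl
      rw [e]
      calc _ ≤ C * (1 + bX.toBioSystem.ktilde r + etaParam B bX s r + betaParam B bX q r) := h2
        _ ≤ C * (4 * W) := by gcongr; linarith
        _ = 4 * C * W := by ring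


end AGpaper
end
end

section
/- Let 𝕊 be a locally convex subsymmetric sequence space and σ=(σ_n) an ordered partition of ℕ with N_n=|σ_n|. Then: (i) ‖P_σ(S_A(f))‖_𝕊 ≤ 4‖f‖_𝕊 for every A⊆ℕ and every f ∈ Q_σ(𝕊); (ii) if 𝕊 satisfies an upper s-estimate for some s≥1, there is a constant C such that for all A⊆ℕ and f∈𝕊, ‖Q_σ(S_A(f))‖_𝕊 ≤ 5‖Q_σ(f)‖_𝕊 + C(Σ_{n=1}^∞ (Λ_{m_n}/Λ_{N_n})^s |v_n*(f)|^s)^{1/s}, where m_n = |A∩σ_n| and Λ_m = Λ_m[𝕊]. -/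
noncomputable section

open Classical
open scoped ENNReal NNReal

namespace AGpaper

/-! ### Biorthogonal systems and Schauder bases -/

variable {X : Type*} [AddCommGroup X] [Module ℝ X]

variable {mem : X → Prop} {nrm : X → ℝ}

/-- Coordinate projection `S_A` on a (possibly infinite) set of coordinates. -/
def restrictSet (A : Set ℕ) (f : ℕ → ℝ) : ℕ → ℝ := fun j => if j ∈ A then f j else 0

lemma spread_zero {φ : ℕ → ℕ} (ε f : ℕ → ℝ) (j : ℕ) (h : ¬ ∃ n, φ n = j) :
    spread φ ε f j = 0 := by
  unfold spread
  rw [dif_neg h]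

namespace SubsymmetricSpace

variable (S : SubsymmetricSpace)

lemma neg_mem' {f : ℕ → ℝ} (hf : S.mem f) : S.mem (-f) := by
  have := S.smul_mem (-1) hf
  simpa using this

lemma sub_mem' {f g : ℕ → ℝ} (hf : S.mem f) (hg : S.mem g) : S.mem (f - g) := by
  rw [sub_eq_add_neg]
  exact S.add_mem hf (S.neg_mem' hg)

lemma nrm_neg' (f : ℕ → ℝ) : S.nrm (-f) = S.nrm f := by
  have := S.nrm_smul (-1) f
  simpa using this

lemma nrm_sub_le' {f g : ℕ → ℝ} (hf : S.mem f) (hg : S.mem g) :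
    S.nrm (f - g) ≤ S.nrm f + S.nrm g := by
  rw [sub_eq_add_neg, ← S.nrm_neg' g]
  exact S.nrm_triangle hf (S.neg_mem' hg)

lemma nrm_zero' : S.nrm 0 = 0 := (S.nrm_eq_zero S.zero_mem).2 rfl

lemma restrict_mem (A : Set ℕ) {f : ℕ → ℝ} (hf : S.mem f) :
    S.mem (restrictSet A f) ∧ S.nrm (restrictSet A f) ≤ S.nrm f := by
  let ε : ℕ → ℝ := fun j => if j ∈ A then 1 else -1
  have hε : ∀ n, |ε n| = 1 := by
    intro n
    by_cases h : n ∈ A <;> simp [ε, h]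
  obtain ⟨h1, h2⟩ := S.subsym hf ε hε id strictMono_id
  have e : restrictSet A f = (1 / 2 : ℝ) • (f + spread id ε f) := by
    rw [spread_id]
    funext j
    by_cases h : j ∈ A <;> simp [restrictSet, ε, h]
    ring
  refine ⟨by rw [e]; exact S.smul_mem _ (S.add_mem hf h1), ?_⟩
  rw [e, S.nrm_smul]
  have := S.nrm_triangle hf h1
  rw [h2] at this
  rw [abs_of_pos (by norm_num)]
  linarith

lemma sum_mem' {ι : Type*} (J : Finset ι) (F : ι → ℕ → ℝ) (h : ∀ i ∈ J, S.mem (F i)) :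
    S.mem (∑ i ∈ J, F i) ∧ S.nrm (∑ i ∈ J, F i) ≤ ∑ i ∈ J, S.nrm (F i) := by
  induction J using Finset.induction_on with
  | empty => exact ⟨by simpa using S.zero_mem, by simp [S.nrm_zero']⟩
  | insert a J ha ih =>
    obtain ⟨h1, h2⟩ := ih (fun i hi => h i (Finset.mem_insert_of_mem hi))
    have h3 := h a (Finset.mem_insert_self _ _)
    rw [Finset.sum_insert ha, Finset.sum_insert ha]
    exact ⟨S.add_mem h3 h1, (S.nrm_triangle h3 h1).trans (by linarith)⟩

lemma fin_mem (f : ℕ → ℝ) (M : ℕ) (h : ∀ j, M ≤ j → f j = 0) : S.mem f := by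
  have e : f = ∑ i ∈ Finset.range M, f i • unitVec i := by
    funext j
    simp only [Finset.sum_apply, Pi.smul_apply, unitVec, smul_eq_mul, mul_ite, mul_one, mul_zero]
    rw [Finset.sum_ite_eq]
    split_ifs with h1
    · rfl
    · exact h j (by simpa using h1)
  rw [e]
  exact (S.sum_mem' _ _ (fun i _ => S.smul_mem _ (S.unit_mem i))).1

/-- Norm invariance under order preserving relocation of a finite support. -/
lemma move (f h : ℕ → ℝ) (D : Finset ℕ) (hf : ∀ j, j ∉ D → f j = 0) (ψ : ℕ → ℕ)
    (hψ : ∀ i ∈ D, ∀ j ∈ D, i < j → ψ i < ψ j) (h1 : ∀ d ∈ D, h (ψ d) = f d)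
    (h2 : ∀ j, (∀ d ∈ D, ψ d ≠ j) → h j = 0) : S.nrm h = S.nrm f := by
  obtain ⟨M, hM⟩ : ∃ M, ∀ d ∈ D, d < M :=
    ⟨D.sup id + 1, fun d hd => Nat.lt_succ_of_le (Finset.le_sup (f := id) hd)⟩
  obtain ⟨B, hB⟩ : ∃ B, ∀ d ∈ D, ψ d < B :=
    ⟨D.sup ψ + 1, fun d hd => Nat.lt_succ_of_le (Finset.le_sup (f := ψ) hd)⟩
  let p : ℕ → Prop := fun x => x ∈ D ∨ M ≤ x
  have hinf : {x | p x}.Infinite :=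
    (Set.Ici_infinite M).mono (fun x hx => Or.inr hx)
  let a := Nat.nth p
  have ha : StrictMono a := Nat.nth_strictMono hinf
  have hap : ∀ k, p (a k) := fun k => Nat.nth_mem_of_infinite hinf k
  have har : ∀ d ∈ D, ∃ k, a k = d := by
    intro d hd
    have : d ∈ Set.range (Nat.nth p) := by
      rw [Nat.range_nth_of_infinite hinf]; exact Or.inl hd
    exact this
  have hdown : ∀ k k', k < k' → a k' ∈ D → a k ∈ D := by
    intro k k' hk hk'
    rcases hap k with h | h
    · exact h
    · have := ha hk
      have := hM _ hk'
      omega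
  let b : ℕ → ℕ := fun k => if a k ∈ D then ψ (a k) else B + k
  have hb : StrictMono b := by
    intro k k' hk
    by_cases h' : a k' ∈ D
    · have h := hdown k k' hk h'
      simp only [b, h, h', if_true]
      exact hψ _ h _ h' (ha hk)
    · by_cases h : a k ∈ D
      · simp only [b, h, h', if_true, if_false]
        have := hB _ h
        omega
      · simp only [b, h, h', if_false]
        omega
  let g : ℕ → ℝ := fun k => f (a k)
  have hg : S.mem g := by
    apply S.fin_mem g M
    intro j hj
    apply hf
    intro hc
    have := hM _ hc
    have := ha.id_le j
    simp only [id] at this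
    omega
  have one : ∀ n : ℕ, |(fun _ => (1:ℝ)) n| = 1 := by simp
  have e1 := (S.subsym hg (fun _ => 1) one a ha).2
  have e2 := (S.subsym hg (fun _ => 1) one b hb).2
  have f1 : spread a (fun _ => 1) g = f := by
    funext j
    by_cases hj : ∃ n, a n = j
    · obtain ⟨n, rfl⟩ := hj
      rw [spread_apply ha]; simp [g]
    · rw [spread_zero _ _ _ hj, hf]
      exact fun hc => hj (har j hc)
  have f2 : spread b (fun _ => 1) g = h := by
    funext j
    by_cases hj : ∃ n, b n = j
    · obtain ⟨n, rfl⟩ := hj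
      rw [spread_apply hb]
      by_cases hn : a n ∈ D
      · simp only [b, hn, if_true, g, one_mul]
        rw [h1 _ hn]
      · simp only [b, hn, if_false, g, one_mul]
        rw [hf _ hn, h2]
        intro d hd
        have := hB d hd
        omega
    · rw [spread_zero _ _ _ hj, h2]
      intro d hd hc
      obtain ⟨k, hk⟩ := har d hd
      apply hj
      refine ⟨k, ?_⟩
      simp only [b, hk, hd, if_true, hc]
  rw [← f1, ← f2, e1, e2]

lemma coord_le {f : ℕ → ℝ} (hf : S.mem f) (j : ℕ) :
    |f j| * S.nrm (unitVec j) ≤ S.nrm f := by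
  have := (S.restrict_mem {j} hf).2
  rw [← S.nrm_smul]
  convert this using 2
  funext i
  by_cases h : i = j <;> simp [unitVec, restrictSet, h]

lemma unit_pos (j : ℕ) : 0 < S.nrm (unitVec j) := by
  refine lt_of_le_of_ne (S.nrm_nonneg _) (fun h => ?_)
  have := (S.nrm_eq_zero (S.unit_mem j)).1 h.symm
  have := congrFun this j
  simp [unitVec] at this

lemma indic_mem (m : ℕ) : S.mem (indic m) :=
  S.fin_mem _ m (fun j hj => by simp [indic, hj])

lemma Lam_pos {m : ℕ} (hm : 0 < m) : 0 < S.Lam m := by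
  refine lt_of_le_of_ne (S.nrm_nonneg _) (fun h => ?_)
  have := (S.nrm_eq_zero (S.indic_mem m)).1 h.symm
  have := congrFun this 0
  simp [indic] at this
  omega

lemma indicator_le (E : Finset ℕ) :
    S.nrm (fun j => if j ∈ E then (1:ℝ) else 0) ≤ S.Lam E.card := by
  let ψ : ℕ → ℕ := fun d => (E.filter (· < d)).card
  have hψ : ∀ i ∈ E, ∀ j ∈ E, i < j → ψ i < ψ j := by
    intro i hi j hj hij
    apply Finset.card_lt_card
    rw [Finset.ssubset_iff_of_subset]
    · exact ⟨i, by simp [hi, hij], by simp⟩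
    · intro x hx
      simp at hx ⊢
      exact ⟨hx.1, hx.2.trans hij⟩
  have hlt : ∀ i ∈ E, ψ i < E.card := by
    intro i hi
    apply Finset.card_lt_card
    rw [Finset.ssubset_iff_of_subset (Finset.filter_subset _ _)]
    exact ⟨i, hi, by simp⟩
  have key := S.move (fun j => if j ∈ E then (1:ℝ) else 0)
    (restrictSet {j | ∃ d ∈ E, ψ d = j} (indic E.card)) E (by intro j hj; simp [hj]) ψ hψ
    (by
      intro d hd
      have : ∃ d' ∈ E, ψ d' = ψ d := ⟨d, hd, rfl⟩
      simp [restrictSet, indic, hd, hlt d hd, this])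
    (by
      intro j hj
      have : ¬ ∃ d ∈ E, ψ d = j := by
        rintro ⟨d, hd, h⟩; exact hj d hd h
      simp only [restrictSet, Set.mem_ofPred_eq, this, if_false])
  rw [← key]
  exact (S.restrict_mem _ (S.indic_mem _)).2

/-- A limit has the expected coordinates, membership and norm bound. -/
lemma limit_eq {u : ℕ → ℕ → ℝ} (hu : ∀ n, S.mem (u n)) {g h : ℕ → ℝ} (hg : S.mem g)
    (hl : QTendsto S.nrm u g) (hp : ∀ j, ∃ n₀, ∀ n, n₀ ≤ n → u n j = h j) : h = g := by
  funext j
  by_contra hne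
  have hpos : 0 < |h j - g j| * S.nrm (unitVec j) :=
    mul_pos (abs_pos.2 (sub_ne_zero.2 hne)) (S.unit_pos j)
  obtain ⟨n1, h1⟩ := hl _ hpos
  obtain ⟨n2, h2⟩ := hp j
  have a1 := h1 (max n1 n2) (le_max_left _ _)
  have a2 := h2 (max n1 n2) (le_max_right _ _)
  have a3 := S.coord_le (S.sub_mem' (hu (max n1 n2)) hg) j
  rw [Pi.sub_apply, a2] at a3
  linarith

lemma limit_le {u : ℕ → ℕ → ℝ} (hu : ∀ n, S.mem (u n)) {g : ℕ → ℝ} (hg : S.mem g)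
    (hl : QTendsto S.nrm u g) (B : ℝ) (hB : ∃ n₀, ∀ n, n₀ ≤ n → S.nrm (u n) ≤ B) :
    S.nrm g ≤ B := by
  apply le_of_forall_pos_le_add
  intro ε hε
  obtain ⟨n1, h1⟩ := hl ε hε
  obtain ⟨n2, h2⟩ := hB
  have a1 := h1 (max n1 n2) (le_max_left _ _)
  have a2 := h2 (max n1 n2) (le_max_right _ _)
  have a3 := S.nrm_sub_le' (hu (max n1 n2)) (S.sub_mem' (hu (max n1 n2)) hg)
  rw [sub_sub_cancel] at a3
  linarith

lemma trunc_eq (m : ℕ) (f : ℕ → ℝ) :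
    (fun j => if j < m then f j else 0) = restrictSet {j | j < m} f := by
  funext j
  simp [restrictSet]

end SubsymmetricSpace

namespace OrderedPartition

variable (σ : OrderedPartition)

/-- The first element of the `n`-th block. -/
def st (n : ℕ) : ℕ := (σ.part n).min' (σ.nonempty n)

lemma st_mem (n : ℕ) : σ.st n ∈ σ.part n := Finset.min'_mem _ _

lemma st_lt (n : ℕ) : σ.st n < σ.st (n + 1) := σ.ordered n _ (σ.st_mem n) _ (σ.st_mem (n + 1))

lemma st_mono : StrictMono σ.st := strictMono_nat_of_lt_succ σ.st_lt

lemma mem_bounds {n k : ℕ} (h : k ∈ σ.part n) : σ.st n ≤ k ∧ k < σ.st (n + 1) :=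
  ⟨Finset.min'_le _ _ h, σ.ordered n _ h _ (σ.st_mem (n + 1))⟩

lemma bounds_unique {n m k : ℕ} (h : σ.st n ≤ k ∧ k < σ.st (n + 1))
    (h' : σ.st m ≤ k ∧ k < σ.st (m + 1)) : n = m := by
  have h1 : σ.st n < σ.st (m + 1) := by omega
  have h2 : σ.st m < σ.st (n + 1) := by omega
  have := σ.st_mono.lt_iff_lt.1 h1
  have := σ.st_mono.lt_iff_lt.1 h2
  omega

lemma mem_iff {n k : ℕ} : k ∈ σ.part n ↔ σ.st n ≤ k ∧ k < σ.st (n + 1) := by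
  refine ⟨σ.mem_bounds, fun h => ?_⟩
  obtain ⟨m, hm⟩ := σ.covers k
  rw [σ.bounds_unique h (σ.mem_bounds hm)]
  exact hm

lemma part_eq (n : ℕ) : σ.part n = Finset.Ico (σ.st n) (σ.st (n + 1)) := by
  ext k
  rw [σ.mem_iff, Finset.mem_Ico]

lemma N_eq (n : ℕ) : σ.N n = σ.st (n + 1) - σ.st n := by
  rw [N, part_eq, Nat.card_Ico]

lemma N_pos (n : ℕ) : 0 < σ.N n := Finset.card_pos.2 (σ.nonempty n)

/-- The block containing `k`. -/
def blk (k : ℕ) : ℕ := (σ.covers k).choose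

lemma blk_mem (k : ℕ) : k ∈ σ.part (σ.blk k) := (σ.covers k).choose_spec

lemma blk_eq {n k : ℕ} (h : k ∈ σ.part n) : σ.blk k = n :=
  σ.bounds_unique (σ.mem_bounds (σ.blk_mem k)) (σ.mem_bounds h)

lemma Pavg_apply (f : ℕ → ℝ) {n j : ℕ} (h : j ∈ σ.part n) :
    σ.Pavg f j = (∑ i ∈ σ.part n, f i) / (σ.N n : ℝ) := by
  have hex : ∃ n, j ∈ σ.part n := ⟨n, h⟩
  have e : hex.choose = n := σ.bounds_unique (σ.mem_bounds hex.choose_spec) (σ.mem_bounds h)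
  unfold Pavg
  rw [dif_pos hex, e]
  rfl

lemma Pavg_add (f g : ℕ → ℝ) : σ.Pavg (f + g) = σ.Pavg f + σ.Pavg g := by
  funext j
  have h := σ.blk_mem j
  rw [Pi.add_apply, σ.Pavg_apply _ h, σ.Pavg_apply _ h, σ.Pavg_apply _ h, ← add_div,
    ← Finset.sum_add_distrib]
  rfl

lemma Pavg_sub (f g : ℕ → ℝ) : σ.Pavg (f - g) = σ.Pavg f - σ.Pavg g := by
  funext j
  have h := σ.blk_mem j
  rw [Pi.sub_apply, σ.Pavg_apply _ h, σ.Pavg_apply _ h, σ.Pavg_apply _ h, ← sub_div,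
    ← Finset.sum_sub_distrib]
  rfl

/-- Cyclic rotation by `r` inside each block. -/
def rot (r k : ℕ) : ℕ := σ.st (σ.blk k) + (k - σ.st (σ.blk k) + r) % σ.N (σ.blk k)

lemma rot_mem (r k : ℕ) : σ.rot r k ∈ σ.part (σ.blk k) := by
  rw [mem_iff, rot]
  have h1 := Nat.mod_lt (k - σ.st (σ.blk k) + r) (σ.N_pos (σ.blk k))
  have h2 := σ.N_eq (σ.blk k)
  omega

/-- The set of points which are not wrapped around by the rotation. -/
def noWrap (r : ℕ) : Set ℕ :=
  {k | k - σ.st (σ.blk k) + r % σ.N (σ.blk k) < σ.N (σ.blk k)}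

lemma rot_of_noWrap {r k : ℕ} (h : k ∈ σ.noWrap r) : σ.rot r k = k + r % σ.N (σ.blk k) := by
  have hb := σ.mem_bounds (σ.blk_mem k)
  have h' : k - σ.st (σ.blk k) + r % σ.N (σ.blk k) < σ.N (σ.blk k) := h
  rw [rot, ← Nat.add_mod_mod, Nat.mod_eq_of_lt h']
  omega

lemma rot_of_wrap {r k : ℕ} (h : k ∉ σ.noWrap r) :
    σ.rot r k + σ.N (σ.blk k) = k + r % σ.N (σ.blk k) := by
  have hb := σ.mem_bounds (σ.blk_mem k)
  have h' : ¬ (k - σ.st (σ.blk k) + r % σ.N (σ.blk k) < σ.N (σ.blk k)) := h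
  have h1 := Nat.mod_lt r (σ.N_pos (σ.blk k))
  have h2 := σ.N_eq (σ.blk k)
  rw [rot, ← Nat.add_mod_mod, Nat.mod_eq_sub_mod (by omega), Nat.mod_eq_of_lt (by omega)]
  omega

lemma rot_lt {r i j : ℕ} (hij : i < j) (h : i ∈ σ.noWrap r ↔ j ∈ σ.noWrap r) :
    σ.rot r i < σ.rot r j := by
  have hi := σ.mem_bounds (σ.blk_mem i)
  have hj := σ.mem_bounds (σ.blk_mem j)
  by_cases hb : σ.blk i = σ.blk j
  · by_cases hw : i ∈ σ.noWrap r
    · have e1 := σ.rot_of_noWrap hw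
      have e2 := σ.rot_of_noWrap (h.1 hw)
      rw [hb] at e1
      omega
    · have e1 := σ.rot_of_wrap hw
      have e2 := σ.rot_of_wrap (fun hc => hw (h.2 hc))
      rw [hb] at e1
      omega
  · have h1 : σ.blk i < σ.blk j := by
      have : σ.st (σ.blk i) < σ.st (σ.blk j + 1) := by omega
      have := σ.st_mono.lt_iff_lt.1 this
      omega
    have h2 : σ.st (σ.blk i + 1) ≤ σ.st (σ.blk j) := σ.st_mono.monotone h1
    have h3 := σ.mem_bounds (σ.rot_mem r i)
    have h4 := σ.mem_bounds (σ.rot_mem r j)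
    omega

lemma rot_lt_st {r j K : ℕ} : σ.rot r j < σ.st K ↔ j < σ.st K := by
  have h3 := σ.mem_bounds (σ.rot_mem r j)
  have hj := σ.mem_bounds (σ.blk_mem j)
  rcases Nat.lt_or_ge (σ.blk j) K with h | h
  · have : σ.st (σ.blk j + 1) ≤ σ.st K := σ.st_mono.monotone h
    omega
  · have : σ.st K ≤ σ.st (σ.blk j) := σ.st_mono.monotone h
    omega

lemma piece_bound (S : SubsymmetricSpace) (f : ℕ → ℝ) (K r : ℕ)
    (hf : ∀ j, σ.st K ≤ j → f j = 0) (D : Finset ℕ)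
    (hD : ∀ i ∈ D, ∀ j ∈ D, i < j → σ.rot r i < σ.rot r j) :
    S.nrm (fun j => if j ∈ D then f (σ.rot r j) else 0) ≤ S.nrm f := by
  have hfm := S.fin_mem f _ hf
  rw [← S.move (fun j => if j ∈ D then f (σ.rot r j) else 0)
    (restrictSet {j | ∃ d ∈ D, σ.rot r d = j} f) D (by intro j hj; simp [hj]) (σ.rot r) hD
    (by
      intro d hd
      have : ∃ d' ∈ D, σ.rot r d' = σ.rot r d := ⟨d, hd, rfl⟩
      simp [restrictSet, hd, this])
    (by
      intro j hj
      have : ¬ ∃ d ∈ D, σ.rot r d = j := by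
        rintro ⟨d, hd, h⟩; exact hj d hd h
      simp only [restrictSet, Set.mem_ofPred_eq, this, if_false])]
  exact (S.restrict_mem _ hfm).2

lemma rot_bound (S : SubsymmetricSpace) (f : ℕ → ℝ) (K r : ℕ)
    (hf : ∀ j, σ.st K ≤ j → f j = 0) :
    S.mem (fun j => f (σ.rot r j)) ∧ S.nrm (fun j => f (σ.rot r j)) ≤ 2 * S.nrm f := by
  let D1 := (Finset.range (σ.st K)).filter (fun j => j ∈ σ.noWrap r)
  let D2 := (Finset.range (σ.st K)).filter (fun j => j ∉ σ.noWrap r)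
  have b1 := σ.piece_bound S f K r hf D1 (by
    intro i hi j hj hij
    simp only [D1, Finset.mem_filter] at hi hj
    exact σ.rot_lt hij (by tauto))
  have b2 := σ.piece_bound S f K r hf D2 (by
    intro i hi j hj hij
    simp only [D2, Finset.mem_filter] at hi hj
    exact σ.rot_lt hij (by tauto))
  have m1 : S.mem (fun j => if j ∈ D1 then f (σ.rot r j) else 0) := by
    apply S.fin_mem _ (σ.st K)
    intro j hj
    rw [if_neg]
    simp [D1, hj]
  have m2 : S.mem (fun j => if j ∈ D2 then f (σ.rot r j) else 0) := by
    apply S.fin_mem _ (σ.st K)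
    intro j hj
    rw [if_neg]
    simp [D2, hj]
  have e : (fun j => f (σ.rot r j)) = (fun j => if j ∈ D1 then f (σ.rot r j) else 0) +
      (fun j => if j ∈ D2 then f (σ.rot r j) else 0) := by
    funext j
    rw [Pi.add_apply]
    by_cases hj : j < σ.st K
    · by_cases hw : j ∈ σ.noWrap r <;> simp [D1, D2, hj, hw]
    · have : f (σ.rot r j) = 0 := hf _ (by
        have := (σ.rot_lt_st (r := r) (j := j) (K := K))
        omega)
      simp [this]
  rw [e]
  exact ⟨S.add_mem m1 m2, (S.nrm_triangle m1 m2).trans (by linarith)⟩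

lemma sum_shift (G : ℕ → ℝ) (N : ℕ) (hG : ∀ k, G (k + N) = G k) (t : ℕ) :
    ∑ r ∈ Finset.range N, G (t + r) = ∑ r ∈ Finset.range N, G r := by
  induction t with
  | zero => simp
  | succ t ih =>
    rw [← ih]
    have h1 := Finset.sum_range_succ (fun r => G (t + r)) N
    have h2 := Finset.sum_range_succ' (fun r => G (t + r)) N
    simp only [add_zero, hG] at h1 h2
    have : ∀ r, G (t + 1 + r) = G (t + (r + 1)) := fun r => by congr 1; omega
    simp only [this]
    linarith

lemma sum_shift_mul (G : ℕ → ℝ) (N : ℕ) (hG : ∀ k, G (k + N) = G k) (t q : ℕ) :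
    ∑ r ∈ Finset.range (N * q), G (t + r) = q * ∑ r ∈ Finset.range N, G r := by
  induction q with
  | zero => simp
  | succ q ih =>
    rw [Nat.mul_succ, Finset.sum_range_add, ih]
    have := sum_shift G N hG (t + N * q)
    simp only [add_assoc] at this ⊢
    rw [this]
    push_cast
    ring

lemma sum_rot (f : ℕ → ℝ) (j q : ℕ) :
    ∑ r ∈ Finset.range (σ.N (σ.blk j) * q), f (σ.rot r j) =
      q * ∑ i ∈ σ.part (σ.blk j), f i := by
  have := sum_shift_mul (fun k => f (σ.st (σ.blk j) + k % σ.N (σ.blk j))) (σ.N (σ.blk j))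
    (by intro k; simp) (j - σ.st (σ.blk j)) q
  simp only [rot]
  rw [this, part_eq, Finset.sum_Ico_eq_sum_range, ← N_eq]
  congr 1
  apply Finset.sum_congr rfl
  intro r hr
  rw [Nat.mod_eq_of_lt (by simpa using hr)]

lemma Pavg_fin (S : SubsymmetricSpace) (f : ℕ → ℝ) (K : ℕ)
    (hf : ∀ j, σ.st K ≤ j → f j = 0) :
    S.mem (σ.Pavg f) ∧ S.nrm (σ.Pavg f) ≤ 2 * S.nrm f := by
  let L := ∏ n ∈ Finset.range K, σ.N n
  have hL : 0 < L := Finset.prod_pos (fun n _ => σ.N_pos n)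
  have hL' : (0:ℝ) < L := by exact_mod_cast hL
  have e : σ.Pavg f = ((L:ℝ)⁻¹) • ∑ r ∈ Finset.range L, fun j => f (σ.rot r j) := by
    funext j
    rw [σ.Pavg_apply f (σ.blk_mem j), Pi.smul_apply, Finset.sum_apply, smul_eq_mul]
    by_cases hj : j < σ.st K
    · have hb : σ.blk j < K := by
        by_contra hc
        have : σ.st K ≤ σ.st (σ.blk j) := σ.st_mono.monotone (not_lt.1 hc)
        have := σ.mem_bounds (σ.blk_mem j)
        omega
      obtain ⟨q, hq⟩ : σ.N (σ.blk j) ∣ L := Finset.dvd_prod_of_mem _ (Finset.mem_range.2 hb)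
      have hN : (σ.N (σ.blk j) : ℝ) ≠ 0 := by
        have := σ.N_pos (σ.blk j)
        positivity
      have hq0 : (q : ℝ) ≠ 0 := by
        rintro h
        have : q = 0 := by exact_mod_cast h
        rw [this] at hq
        omega
      rw [hq, σ.sum_rot]
      push_cast
      field_simp
    · rw [Finset.sum_eq_zero, Finset.sum_eq_zero]
      · simp
      · intro r _
        apply hf
        have := (σ.rot_lt_st (r := r) (j := j) (K := K))
        omega
      · intro i hi
        apply hf
        have h1 := σ.mem_bounds (σ.blk_mem j)
        have h2 := σ.mem_bounds hi
        have : K < σ.blk j + 1 := σ.st_mono.lt_iff_lt.1 (by omega)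
        have : σ.st K ≤ σ.st (σ.blk j) := σ.st_mono.monotone (by omega)
        omega
  have hs := S.sum_mem' (Finset.range L) (fun r j => f (σ.rot r j))
    (fun r _ => (σ.rot_bound S f K r hf).1)
  have hsum : ∑ r ∈ Finset.range L, S.nrm (fun j => f (σ.rot r j)) ≤ L * (2 * S.nrm f) := by
    have := Finset.sum_le_sum (s := Finset.range L)
      (fun r _ => (σ.rot_bound S f K r hf).2)
    simpa using this
  rw [e]
  refine ⟨S.smul_mem _ hs.1, ?_⟩
  rw [S.nrm_smul, abs_of_pos (by positivity), inv_mul_le_iff₀ hL']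
  exact hs.2.trans hsum

lemma le_st (K : ℕ) : K ≤ σ.st K := σ.st_mono.id_le K

lemma Pavg_trunc (f : ℕ → ℝ) (K j : ℕ) (hj : j < σ.st K) :
    σ.Pavg (restrictSet {j | j < σ.st K} f) j = σ.Pavg f j := by
  rw [σ.Pavg_apply _ (σ.blk_mem j), σ.Pavg_apply _ (σ.blk_mem j)]
  congr 1
  apply Finset.sum_congr rfl
  intro i hi
  have h1 := σ.mem_bounds (σ.blk_mem j)
  have h2 := σ.mem_bounds hi
  have : σ.blk j < K := σ.st_mono.lt_iff_lt.1 (by omega)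
  have : σ.st (σ.blk j + 1) ≤ σ.st K := σ.st_mono.monotone (by omega)
  have : i < σ.st K := by omega
  simp [restrictSet, this]

lemma trunc_tendsto (S : SubsymmetricSpace) {f : ℕ → ℝ} (hf : S.mem f) :
    QTendsto S.nrm (fun K => restrictSet {j | j < σ.st K} f) f := by
  intro ε hε
  obtain ⟨n0, h⟩ := S.unit_basis f hf ε hε
  refine ⟨n0, fun n hn => ?_⟩
  have := h (σ.st n) (hn.trans (σ.le_st n))
  simp only [SubsymmetricSpace.trunc_eq] at this
  exact this

lemma Pavg_bound (S : SubsymmetricSpace) {f : ℕ → ℝ} (hf : S.mem f) :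
    S.mem (σ.Pavg f) ∧ S.nrm (σ.Pavg f) ≤ 2 * S.nrm f := by
  let t : ℕ → ℕ → ℝ := fun K => restrictSet {j | j < σ.st K} f
  have ht : ∀ K, S.mem (t K) ∧ S.nrm (t K) ≤ S.nrm f := fun K => S.restrict_mem _ hf
  have htz : ∀ K j, σ.st K ≤ j → t K j = 0 := by
    intro K j hj
    simp [t, restrictSet, hj]
  let u : ℕ → ℕ → ℝ := fun K => σ.Pavg (t K)
  have hu : ∀ K, S.mem (u K) ∧ S.nrm (u K) ≤ 2 * S.nrm (t K) :=
    fun K => σ.Pavg_fin S (t K) K (htz K)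
  have hc : QCauchy S.nrm u := by
    intro ε hε
    obtain ⟨n0, h0⟩ := σ.trunc_tendsto S hf (ε / 4) (by positivity)
    refine ⟨n0, fun m hm n hn => ?_⟩
    have a1 : S.nrm (t m - f) < ε / 4 := h0 m hm
    have a2 : S.nrm (t n - f) < ε / 4 := h0 n hn
    have a3 := S.nrm_sub_le' (S.sub_mem' (ht m).1 hf) (S.sub_mem' (ht n).1 hf)
    rw [sub_sub_sub_cancel_right] at a3
    have a4 := (σ.Pavg_fin S (t m - t n) (max m n) (by
      intro j hj
      have h1 : σ.st m ≤ σ.st (max m n) := σ.st_mono.monotone (le_max_left _ _)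
      have h2 : σ.st n ≤ σ.st (max m n) := σ.st_mono.monotone (le_max_right _ _)
      rw [Pi.sub_apply, htz m j (by omega), htz n j (by omega), sub_zero])).2
    rw [Pavg_sub] at a4
    change S.nrm (u m - u n) ≤ _ at a4
    linarith
  obtain ⟨g, hg, hl⟩ := S.complete u (fun K => (hu K).1) hc
  have e : σ.Pavg f = g := S.limit_eq (fun K => (hu K).1) hg hl (by
    intro j
    refine ⟨j + 1, fun n hn => ?_⟩
    exact σ.Pavg_trunc f n j (by have := σ.le_st n; omega))
  rw [e]
  refine ⟨hg, S.limit_le (fun K => (hu K).1) hg hl _ ⟨0, fun n _ => ?_⟩⟩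
  have h1 := (hu n).2
  have h2 := (ht n).2
  linarith

lemma Qavg_mem (S : SubsymmetricSpace) {f : ℕ → ℝ} (hf : S.mem f) : S.mem (σ.Qavg f) :=
  S.sub_mem' hf (σ.Pavg_bound S hf).1

lemma Qavg_bound (S : SubsymmetricSpace) {f : ℕ → ℝ} (hf : S.mem f) :
    S.nrm (σ.Qavg f) ≤ 3 * S.nrm f := by
  have h1 := S.nrm_sub_le' hf (σ.Pavg_bound S hf).1
  have h2 := (σ.Pavg_bound S hf).2
  unfold Qavg
  linarith

lemma Qavg_add (f g : ℕ → ℝ) : σ.Qavg (f + g) = σ.Qavg f + σ.Qavg g := by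
  unfold Qavg
  rw [Pavg_add]
  abel

/-- The `n`-th block of `S_A P_σ f`. -/
def blockPart (A : Set ℕ) (f : ℕ → ℝ) (n : ℕ) : ℕ → ℝ :=
  restrictSet (A ∩ ↑(σ.part n)) (σ.Pavg f)

lemma blockPart_nrm (S : SubsymmetricSpace) (A : Set ℕ) (f : ℕ → ℝ) (n : ℕ) :
    S.nrm (σ.blockPart A f n) ≤
      S.Lam ((A ∩ ↑(σ.part n)).ncard) / S.Lam (σ.N n) * |vstar S σ n f| := by
  let E := (σ.part n).filter (· ∈ A)
  have hE : (A ∩ ↑(σ.part n)) = (E : Set ℕ) := by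
    ext x
    simp [E, and_comm]
  have e : σ.blockPart A f n = ((∑ i ∈ σ.part n, f i) / (σ.N n : ℝ)) •
      (fun j => if j ∈ E then (1:ℝ) else 0) := by
    funext j
    unfold blockPart
    rw [hE]
    by_cases hj : j ∈ E
    · have : j ∈ σ.part n := (Finset.mem_filter.1 hj).1
      simp [restrictSet, hj, σ.Pavg_apply f this]
    · simp [restrictSet, hj]
  have hL := S.Lam_pos (σ.N_pos n)
  rw [e, hE, Set.ncard_coe_finset, S.nrm_smul]
  have h1 := S.indicator_le E
  have h2 : |vstar S σ n f| = S.Lam (σ.N n) * |(∑ i ∈ σ.part n, f i) / (σ.N n : ℝ)| := by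
    unfold vstar
    rw [div_mul_eq_mul_div, mul_div_assoc, abs_mul, abs_of_pos hL]
  rw [h2, ← mul_assoc, div_mul_cancel₀ _ hL.ne', mul_comm]
  gcongr

lemma sum_blockPart (A : Set ℕ) (f : ℕ → ℝ) (K : ℕ) :
    restrictSet {j | j < σ.st K} (restrictSet A (σ.Pavg f)) =
      ∑ n ∈ Finset.range K, σ.blockPart A f n := by
  funext j
  rw [Finset.sum_apply]
  have hz : ∀ n, n ≠ σ.blk j → σ.blockPart A f n j = 0 := by
    intro n hn
    have : j ∉ σ.part n := fun hc => hn (σ.blk_eq hc).symm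
    simp [blockPart, restrictSet, this]
  have hb := σ.mem_bounds (σ.blk_mem j)
  by_cases hj : σ.blk j < K
  · rw [Finset.sum_eq_single (σ.blk j) (fun n _ hn => hz n hn) (by simp [hj])]
    have : σ.st (σ.blk j + 1) ≤ σ.st K := σ.st_mono.monotone (by omega)
    have : j < σ.st K := by omega
    simp [blockPart, restrictSet, this, σ.blk_mem j]
  · rw [Finset.sum_eq_zero]
    · have : σ.st K ≤ σ.st (σ.blk j) := σ.st_mono.monotone (by omega)
      have : σ.st K ≤ j := by omega
      simp [restrictSet, this]
    · intro n hn
      apply hz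
      rintro rfl
      exact hj (Finset.mem_range.1 hn)

end OrderedPartition

lemma restrictSet_add (A : Set ℕ) (f g : ℕ → ℝ) :
    restrictSet A (f + g) = restrictSet A f + restrictSet A g := by
  funext j
  by_cases h : j ∈ A <;> simp [restrictSet, h]

lemma upper_bound (S : SubsymmetricSpace) (σ : OrderedPartition) (s C : ℝ) (hs : 1 ≤ s)
    (hC0 : 0 ≤ C)
    (hC : ∀ (J : Finset ℕ) (F : ℕ → (ℕ → ℝ)), (∀ i ∈ J, S.mem (F i)) → DisjFam F J →
      S.nrm (∑ i ∈ J, F i) ≤ C * (∑ i ∈ J, S.nrm (F i) ^ s) ^ (1 / s))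
    (A : Set ℕ) (f : ℕ → ℝ) (hf : S.mem f) :
    ENNReal.ofReal (S.nrm (restrictSet A (σ.Pavg f))) ≤
      ENNReal.ofReal C * (∑' n : ℕ, ENNReal.ofReal
        ((S.Lam ((A ∩ ↑(σ.part n)).ncard) / S.Lam (σ.N n)) ^ s *
          |vstar S σ n f| ^ s)) ^ (1 / s) := by
  have hs0 : 0 ≤ 1 / s := by positivity
  have hP := (σ.Pavg_bound S hf).1
  have hm := (S.restrict_mem A hP).1
  set T : ℕ → ℝ := fun n => (S.Lam ((A ∩ ↑(σ.part n)).ncard) / S.Lam (σ.N n)) ^ s *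
          |vstar S σ n f| ^ s with hT
  have hratio : ∀ n, 0 ≤ S.Lam ((A ∩ ↑(σ.part n)).ncard) / S.Lam (σ.N n) := fun n =>
    div_nonneg (S.nrm_nonneg _) (S.nrm_nonneg _)
  have hT0 : ∀ n, 0 ≤ T n := fun n => mul_nonneg (Real.rpow_nonneg (hratio n) _)
    (Real.rpow_nonneg (abs_nonneg _) _)
  have hpart : ∀ K, ENNReal.ofReal (S.nrm (restrictSet {j | j < σ.st K}
      (restrictSet A (σ.Pavg f)))) ≤
      ENNReal.ofReal C * (∑' n : ℕ, ENNReal.ofReal (T n)) ^ (1 / s) := by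
    intro K
    rw [σ.sum_blockPart]
    have h1 := hC (Finset.range K) (σ.blockPart A f)
      (fun n _ => (S.restrict_mem _ hP).1) (by
        intro i _ j _ hij k
        by_cases hk : k ∈ σ.part i
        · right
          have : k ∉ σ.part j := fun hc => hij ((σ.blk_eq hk).symm.trans (σ.blk_eq hc))
          simp [OrderedPartition.blockPart, restrictSet, this]
        · left
          simp [OrderedPartition.blockPart, restrictSet, hk])
    have h2 : ∑ n ∈ Finset.range K, S.nrm (σ.blockPart A f n) ^ s ≤
        ∑ n ∈ Finset.range K, T n := by
      apply Finset.sum_le_sum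
      intro n _
      rw [hT]
      simp only
      rw [← Real.mul_rpow (hratio n) (abs_nonneg _)]
      exact Real.rpow_le_rpow (S.nrm_nonneg _) (σ.blockPart_nrm S A f n) (by linarith)
    have h0 : 0 ≤ ∑ n ∈ Finset.range K, S.nrm (σ.blockPart A f n) ^ s :=
      Finset.sum_nonneg (fun n _ => Real.rpow_nonneg (S.nrm_nonneg _) _)
    have h3 : S.nrm (∑ n ∈ Finset.range K, σ.blockPart A f n) ≤
        C * (∑ n ∈ Finset.range K, T n) ^ (1 / s) :=
      h1.trans (mul_le_mul_of_nonneg_left (Real.rpow_le_rpow h0 h2 hs0) hC0)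
    refine (ENNReal.ofReal_le_ofReal h3).trans ?_
    rw [ENNReal.ofReal_mul hC0,
      ← ENNReal.ofReal_rpow_of_nonneg (Finset.sum_nonneg (fun n _ => hT0 n)) hs0,
      ENNReal.ofReal_sum_of_nonneg (fun n _ => hT0 n)]
    gcongr
    exact ENNReal.sum_le_tsum _
  by_cases htop : ENNReal.ofReal C * (∑' n : ℕ, ENNReal.ofReal (T n)) ^ (1 / s) = ⊤
  · rw [htop]; exact le_top
  · rw [ENNReal.ofReal_le_iff_le_toReal htop]
    refine S.limit_le (fun K => (S.restrict_mem _ hm).1) hm (σ.trunc_tendsto S hm) _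
      ⟨0, fun n _ => ?_⟩
    exact (ENNReal.ofReal_le_iff_le_toReal htop).1 (hpart n)

theorem statement15 (S : SubsymmetricSpace) (σ : OrderedPartition) :
    (∀ g : ℕ → ℝ, S.mem g → ∀ A : Set ℕ,
      S.nrm (σ.Pavg (restrictSet A (σ.Qavg g))) ≤ 4 * S.nrm (σ.Qavg g)) ∧
    (∀ s : ℝ, 1 ≤ s → S.UpperEst s → ∃ C : ℝ, 0 ≤ C ∧
      ∀ (A : Set ℕ) (f : ℕ → ℝ), S.mem f →
        ENNReal.ofReal (S.nrm (σ.Qavg (restrictSet A f))) ≤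
          ENNReal.ofReal (5 * S.nrm (σ.Qavg f)) +
          ENNReal.ofReal C *
            (∑' n : ℕ, ENNReal.ofReal
              ((S.Lam ((A ∩ ↑(σ.part n)).ncard) / S.Lam (σ.N n)) ^ s *
                |vstar S σ n f| ^ s)) ^ (1 / s)) := by

  refine ⟨fun g hg A => ?_, fun s hs hU => ?_⟩
  · have hq := σ.Qavg_mem S hg
    have h1 := S.restrict_mem A hq
    have h2 := (σ.Pavg_bound S h1.1).2
    have := S.nrm_nonneg (σ.Qavg g)
    linarith [h1.2]
  · obtain ⟨C, hC⟩ := hU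
    refine ⟨3 * |C|, by positivity, fun A f hf => ?_⟩
    have hb := upper_bound S σ s |C| hs (abs_nonneg C) (by
      intro J F h1 h2
      refine (hC J F h1 h2).trans (mul_le_mul_of_nonneg_right (le_abs_self C) ?_)
      exact Real.rpow_nonneg (Finset.sum_nonneg
        (fun n _ => Real.rpow_nonneg (S.nrm_nonneg _) _)) _) A f hf
    have hP := (σ.Pavg_bound S hf).1
    have hQ := σ.Qavg_mem S hf
    have e : f = σ.Qavg f + σ.Pavg f := by simp [OrderedPartition.Qavg]
    have e2 : σ.Qavg (restrictSet A f) =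
        σ.Qavg (restrictSet A (σ.Qavg f)) + σ.Qavg (restrictSet A (σ.Pavg f)) := by
      rw [← σ.Qavg_add, ← restrictSet_add, ← e]
    have r1 := S.restrict_mem A hQ
    have r2 := S.restrict_mem A hP
    have b1 := σ.Qavg_bound S r1.1
    have b2 := σ.Qavg_bound S r2.1
    have b3 := S.nrm_triangle (σ.Qavg_mem S r1.1) (σ.Qavg_mem S r2.1)
    rw [← e2] at b3
    have h0 := S.nrm_nonneg (σ.Qavg f)
    have b4 : S.nrm (σ.Qavg (restrictSet A f)) ≤
        5 * S.nrm (σ.Qavg f) + 3 * S.nrm (restrictSet A (σ.Pavg f)) := by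
      linarith [r1.2]
    refine (ENNReal.ofReal_le_ofReal b4).trans ?_
    rw [ENNReal.ofReal_add (by positivity)
      (mul_nonneg (by norm_num) (S.nrm_nonneg _)), ENNReal.ofReal_mul (p := 3) (by norm_num),
      ENNReal.ofReal_mul (p := 3) (by norm_num), mul_assoc]
    gcongr

end AGpaper
end
end

section
/- Let (N_n)_{n=1}^∞ be a sequence of positive integers such that M_n := Σ_{k=1}^n N_k ≤ c·N_{n+1} for some constant c and all n. Let (Γ_n)_{n=1}^∞ be a sequence of positive reals having the lower regularity property, such that both (Γ_n) and (n/Γ_n) are non-decreasing, and let 0<p≤1. Then sup_{r∈ℕ} Σ_{n=1}^r Γ_{N_n}^p/Γ_{N_r}^p < ∞ and sup_{r∈ℕ} Σ_{n=r}^∞ Γ_{N_r}^p/Γ_{N_n}^p < ∞. -/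
noncomputable section

open Classical
open scoped ENNReal NNReal

namespace AGpaper

/-! ### Biorthogonal systems and Schauder bases -/

variable {X : Type*} [AddCommGroup X] [Module ℝ X]

variable {mem : X → Prop} {nrm : X → ℝ}

theorem geo_sum_aux (f : ℕ → ℝ) (s : ℕ) (δ B : ℝ) (hδ : δ < 1) (hf0 : ∀ n, 0 ≤ f n)
    (hfB : ∀ n, f n ≤ B) (hs : ∀ n, f (s + n) ≤ δ * f n) (R : ℕ) :
    ∑ n ∈ Finset.range R, f n ≤ s * B / (1 - δ) := by
  rw [le_div_iff₀ (by linarith)]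
  have h1 : ∑ n ∈ Finset.range R, f n ≤ ∑ n ∈ Finset.range (s + R), f n :=
    Finset.sum_le_sum_of_subset_of_nonneg
      (Finset.range_mono (by omega)) (fun i _ _ => hf0 i)
  rw [Finset.sum_range_add] at h1
  have h2 : ∑ n ∈ Finset.range s, f n ≤ s * B := by
    have := Finset.sum_le_card_nsmul (Finset.range s) f B (fun i _ => hfB i)
    simpa using this
  have h3 : ∑ n ∈ Finset.range R, f (s + n) ≤ δ * ∑ n ∈ Finset.range R, f n := by
    rw [Finset.mul_sum]
    exact Finset.sum_le_sum (fun i _ => hs i)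
  linarith

theorem statement16 (N : ℕ → ℕ) (hN : ∀ n, 0 < N n) (c : ℝ)
    (hMN : ∀ n : ℕ, (∑ k ∈ Finset.range n, (N k : ℝ)) ≤ c * (N n : ℝ))
    (Γ : ℕ → ℝ) (hΓpos : ∀ m : ℕ, 1 ≤ m → 0 < Γ m)
    (hLRP : ∃ b : ℕ, 0 < b ∧ ∀ m : ℕ, 1 ≤ m → 2 * Γ m ≤ Γ (b * m))
    (hΓmono : ∀ m n : ℕ, 1 ≤ m → m ≤ n → Γ m ≤ Γ n)
    (hΓdual : ∀ m n : ℕ, 1 ≤ m → m ≤ n → (m : ℝ) / Γ m ≤ (n : ℝ) / Γ n)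
    (p : ℝ) (hp0 : 0 < p) (hp1 : p ≤ 1) :
    (∃ K : ℝ, ∀ r : ℕ,
      (∑ n ∈ Finset.range (r + 1), Γ (N n) ^ p / Γ (N r) ^ p) ≤ K) ∧
    (∃ K : ℝ, ∀ r R : ℕ,
      (∑ n ∈ Finset.Icc r R, Γ (N r) ^ p / Γ (N n) ^ p) ≤ K) := by
  obtain ⟨b, hb0, hb⟩ := hLRP
  have hNr : ∀ n, (0 : ℝ) < N n := fun n => by exact_mod_cast hN n
  have hc : 0 < c := by
    have h := hMN 1
    simp only [Finset.range_one, Finset.sum_singleton] at h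
    by_contra hcon
    nlinarith [hNr 0, hNr 1]
  set M : ℕ → ℝ := fun n => ∑ k ∈ Finset.range n, (N k : ℝ) with hM
  have hMs : ∀ n, M (n + 1) = M n + N n := fun n => Finset.sum_range_succ _ _
  have hM0 : ∀ n, 0 ≤ M n := fun n => Finset.sum_nonneg (fun i _ => (hNr i).le)
  have hMc : ∀ n, M n ≤ c * N n := hMN
  set θ : ℝ := c / (1 + c) with hθ
  have hθ0 : 0 < θ := by positivity
  have hθ1 : θ < 1 := by rw [hθ, div_lt_one (by linarith)]; linarith
  have hstep : ∀ n, M n ≤ θ * M (n + 1) := by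
    intro n
    rw [hθ, div_mul_eq_mul_div, le_div_iff₀ (by linarith), hMs]
    nlinarith [hMc n]
  have hpow : ∀ n k, M n ≤ θ ^ k * M (n + k) := by
    intro n k
    induction k with
    | zero => simp
    | succ k ih =>
      refine ih.trans ?_
      rw [pow_succ, mul_assoc]
      exact mul_le_mul_of_nonneg_left (hstep (n + k)) (by positivity)
  have hNN : ∀ n k, (N n : ℝ) ≤ θ ^ k * ((1 + c) * N (n + k)) := by
    intro n k
    have h1 : (N n : ℝ) ≤ M (n + 1) := by rw [hMs]; linarith [hM0 n]
    have h2 := hpow (n + 1) k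
    have h3 : M (n + 1 + k) ≤ (1 + c) * N (n + k) := by
      rw [show n + 1 + k = n + k + 1 by ring, hMs]; linarith [hMc (n + k)]
    exact (h1.trans h2).trans (mul_le_mul_of_nonneg_left h3 (by positivity))
  -- the gap
  have hbr : (0 : ℝ) < b := by exact_mod_cast hb0
  obtain ⟨s, hs⟩ := exists_pow_lt_of_lt_one (show (0 : ℝ) < 1 / ((1 + c) * b) by positivity) hθ1
  have hgap : ∀ n, 2 * Γ (N n) ≤ Γ (N (s + n)) := by
    intro n
    refine (hb _ (hN n)).trans (hΓmono _ _ (Nat.mul_pos hb0 (hN n)) ?_)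
    have h1 := hNN n s
    rw [add_comm s n]
    rw [lt_div_iff₀ (by positivity)] at hs
    have h2 : (b : ℝ) * N n ≤ N (n + s) := by
      calc (b : ℝ) * N n ≤ b * (θ ^ s * ((1 + c) * N (n + s))) :=
            mul_le_mul_of_nonneg_left h1 hbr.le
        _ = (θ ^ s * ((1 + c) * b)) * N (n + s) := by ring
        _ ≤ 1 * N (n + s) := mul_le_mul_of_nonneg_right hs.le (hNr _).le
        _ = _ := one_mul _
    exact_mod_cast h2
  obtain ⟨L, hL⟩ := exists_nat_ge (1 + c)
  have hL0 : 0 < L := by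
    have : (0 : ℝ) < L := by linarith
    exact_mod_cast this
  have hLr : (0 : ℝ) < L := by exact_mod_cast hL0
  have hG : ∀ n, 0 < Γ (N n) := fun n => hΓpos _ (hN n)
  have hdom : ∀ n k, Γ (N n) ≤ L * Γ (N (n + k)) := by
    intro n k
    have h1 : N n ≤ L * N (n + k) := by
      have h2 := hNN n k
      have h3 : θ ^ k ≤ 1 := pow_le_one₀ hθ0.le hθ1.le
      have h4 : (N n : ℝ) ≤ L * N (n + k) := by
        have h5 : 0 ≤ (1 + c) * (N (n + k) : ℝ) := by have := hNr (n + k); positivity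
        have h6 := mul_le_mul_of_nonneg_right hL (hNr (n + k)).le
        have h7 := mul_le_mul_of_nonneg_right h3 h5
        linarith
      exact_mod_cast h4
    refine (hΓmono _ _ (hN n) h1).trans ?_
    have hk := hNr (n + k)
    have hpos' : 0 < Γ (L * N (n + k)) := hΓpos _ (Nat.mul_pos hL0 (hN _))
    have h := hΓdual (N (n + k)) (L * N (n + k)) (hN _) (Nat.le_mul_of_pos_left _ hL0)
    rw [div_le_div_iff₀ (hG _) hpos'] at h
    push_cast at h
    have : (N (n + k) : ℝ) * Γ (L * N (n + k)) ≤ N (n + k) * (L * Γ (N (n + k))) := by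
      linarith
    exact le_of_mul_le_mul_left this hk
  set a : ℕ → ℝ := fun n => Γ (N n) ^ p with ha
  have ha0 : ∀ n, 0 < a n := fun n => Real.rpow_pos_of_pos (hG n) p
  set A : ℝ := (L : ℝ) ^ p with hA
  have hA0 : 0 < A := Real.rpow_pos_of_pos hLr p
  have haA : ∀ n k, a n ≤ A * a (n + k) := by
    intro n k
    have := Real.rpow_le_rpow (hG n).le (hdom n k) hp0.le
    rwa [Real.mul_rpow hLr.le (hG _).le] at this
  have h2p : (1 : ℝ) < 2 ^ p := Real.one_lt_rpow (by norm_num) hp0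
  have hag : ∀ n, 2 ^ p * a n ≤ a (s + n) := by
    intro n
    have := Real.rpow_le_rpow (by have := hG n; positivity) (hgap n) hp0.le
    rwa [Real.mul_rpow (by norm_num) (hG _).le] at this
  set δ : ℝ := (2 ^ p)⁻¹ with hδ
  have hδ1 : δ < 1 := inv_lt_one_of_one_lt₀ h2p
  have hδ0 : 0 < δ := by positivity
  have hag' : ∀ n, a n ≤ δ * a (s + n) := by
    intro n
    rw [hδ, inv_mul_eq_div, le_div_iff₀ (by positivity)]
    linarith [hag n]
  refine ⟨⟨s * A / (1 - δ), fun r => ?_⟩, ⟨s * A / (1 - δ), fun r R => ?_⟩⟩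
  · change ∑ n ∈ Finset.range (r + 1), a n / a r ≤ _
    rw [← Finset.sum_range_reflect]
    have key := geo_sum_aux (fun j => if j ≤ r then a (r - j) / a r else 0) s δ A hδ1
      ?_ ?_ ?_ (r + 1)
    · refine le_trans (le_of_eq (Finset.sum_congr rfl fun j hj => ?_)) key
      have hj' : j ≤ r := by have := Finset.mem_range.1 hj; omega
      simp only [hj', if_true]
      congr 2
    · intro n
      split_ifs
      · exact (div_pos (ha0 _) (ha0 _)).le
      · exact le_rfl
    · intro n
      split_ifs with h
      · rw [div_le_iff₀ (ha0 _)]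
        have := haA (r - n) n
        rwa [Nat.sub_add_cancel h] at this
      · exact hA0.le
    · intro n
      by_cases h : s + n ≤ r
      · have h' : n ≤ r := by omega
        rw [if_pos h, if_pos h', ← mul_div_assoc]
        have := hag' (r - (s + n))
        rw [show s + (r - (s + n)) = r - n by omega] at this
        exact div_le_div_of_nonneg_right this (ha0 _).le
      · rw [if_neg h]
        split_ifs
        · exact mul_nonneg hδ0.le (div_pos (ha0 _) (ha0 _)).le
        · simp
  · change ∑ n ∈ Finset.Icc r R, a r / a n ≤ _
    rw [← Finset.Ico_add_one_right_eq_Icc, Finset.sum_Ico_eq_sum_range]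
    refine geo_sum_aux (fun j => a r / a (r + j)) s δ A hδ1 ?_ ?_ ?_ _
    · intro n
      exact (div_pos (ha0 _) (ha0 _)).le
    · intro n
      rw [div_le_iff₀ (ha0 _)]
      exact haA r n
    · intro n
      rw [← mul_div_assoc, div_le_div_iff₀ (ha0 _) (ha0 _)]
      have := hag' (r + n)
      rw [show s + (r + n) = r + (s + n) by ring] at this
      nlinarith [mul_le_mul_of_nonneg_left this (ha0 r).le]


end AGpaper
end
end

section
/- Let (N_n)_{n=1}^∞ be a sequence of positive integers such that M_n := Σ_{k=1}^n N_k ≤ c·N_{n+1} for some constant c and all n. Let (Γ_n)_{n=1}^∞ be a sequence of positive reals having the lower regularity property, such that both (Γ_n) and (n/Γ_n) are non-decreasing, and let 0<q≤1. Then there is a constant C such that Σ_{n=r}^∞ (Γ_{m_n}/Γ_{N_n})^q ≤ C^q for every r∈ℕ and every sequence (m_n)_{n=r}^∞ of positive integers with m_n ≤ M_r for all n ≥ r. -/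
noncomputable section

open Classical
open scoped ENNReal NNReal

namespace AGpaper

/-! ### Biorthogonal systems and Schauder bases -/

variable {X : Type*} [AddCommGroup X] [Module ℝ X]

variable {mem : X → Prop} {nrm : X → ℝ}

/-- A geometric-type bound for a sequence contracted by `θ` every `K` steps. -/
lemma sum_contract (f : ℕ → ℝ) (K : ℕ) (θ : ℝ) (hθ : θ < 1) (h0 : ∀ n, 0 ≤ f n)
    (h1 : ∀ n, f n ≤ f 0) (h2 : ∀ n, f (n + K) ≤ θ * f n) (L : ℕ) :
    ∑ i ∈ Finset.range L, f i ≤ (K / (1 - θ)) * f 0 := by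
  have hT : ∑ i ∈ Finset.range L, f i ≤ K * f 0 + θ * ∑ i ∈ Finset.range L, f i := by
    calc ∑ i ∈ Finset.range L, f i ≤ ∑ i ∈ Finset.range (K + L), f i :=
          Finset.sum_le_sum_of_subset_of_nonneg
            (Finset.range_subset_range.2 (by omega)) (fun i _ _ => h0 i)
      _ = ∑ i ∈ Finset.range K, f i + ∑ i ∈ Finset.range L, f (K + i) :=
          Finset.sum_range_add f K L
      _ ≤ K * f 0 + θ * ∑ i ∈ Finset.range L, f i := by
          apply add_le_add
          · calc ∑ i ∈ Finset.range K, f i ≤ ∑ i ∈ Finset.range K, f 0 :=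
                  Finset.sum_le_sum (fun i _ => h1 i)
              _ = K * f 0 := by simp
          · rw [Finset.mul_sum]
            apply Finset.sum_le_sum
            intro i _
            rw [add_comm]
            exact h2 i
  rw [div_mul_eq_mul_div, le_div_iff₀ (by linarith)]
  linarith

theorem statement17 (N : ℕ → ℕ) (hN : ∀ n, 0 < N n) (c : ℝ)
    (hMN : ∀ n : ℕ, (∑ k ∈ Finset.range n, (N k : ℝ)) ≤ c * (N n : ℝ))
    (Γ : ℕ → ℝ) (hΓpos : ∀ m : ℕ, 1 ≤ m → 0 < Γ m)
    (hLRP : ∃ b : ℕ, 0 < b ∧ ∀ m : ℕ, 1 ≤ m → 2 * Γ m ≤ Γ (b * m))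
    (hΓmono : ∀ m n : ℕ, 1 ≤ m → m ≤ n → Γ m ≤ Γ n)
    (hΓdual : ∀ m n : ℕ, 1 ≤ m → m ≤ n → (m : ℝ) / Γ m ≤ (n : ℝ) / Γ n)
    (q : ℝ) (hq0 : 0 < q) (hq1 : q ≤ 1) :
    ∃ C : ℝ, 0 ≤ C ∧ ∀ r : ℕ, ∀ m : ℕ → ℕ,
      (∀ n, r ≤ n → 1 ≤ m n ∧ m n ≤ ∑ k ∈ Finset.range (r + 1), N k) →
      ∀ R : ℕ, (∑ n ∈ Finset.Icc r R, (Γ (m n) / Γ (N n)) ^ q) ≤ C ^ q := by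
  obtain ⟨b, hb, hbΓ⟩ := hLRP
  obtain ⟨D, hD⟩ := exists_nat_ge (max (c + 1) 1)
  have hDc : c + 1 ≤ (D : ℝ) := le_trans (le_max_left _ _) hD
  have hD1 : (1 : ℝ) ≤ (D : ℝ) := le_trans (le_max_right _ _) hD
  have hD0 : (0 : ℝ) < D := by linarith
  have hD1n : 1 ≤ D := by exact_mod_cast hD1
  set S : ℕ → ℕ := fun n => ∑ k ∈ Finset.range (n + 1), N k with hS
  have hSsucc : ∀ n, S (n + 1) = S n + N (n + 1) := fun n => Finset.sum_range_succ N (n + 1)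
  have hSmono : Monotone S := monotone_nat_of_le_succ (fun n => by rw [hSsucc]; omega)
  have hSD : ∀ n, S n ≤ D * N n := by
    intro n
    have h := hMN n
    have h2 : (S n : ℝ) = ∑ k ∈ Finset.range n, (N k : ℝ) + N n := by
      simp only [hS, Finset.sum_range_succ]; push_cast; ring
    have h3 : (0 : ℝ) < N n := by exact_mod_cast hN n
    have : (S n : ℝ) ≤ D * N n := by rw [h2]; nlinarith
    exact_mod_cast this
  have hSpos : ∀ n, 1 ≤ S n := by
    intro n
    have h := Finset.single_le_sum (f := N) (fun i _ => Nat.zero_le _)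
      (Finset.self_mem_range_succ n)
    exact le_trans (hN n) h
  have hgrow : ∀ n, (1 + 1 / (D : ℝ)) * S n ≤ S (n + 1) := by
    intro n
    have h := hMN (n + 1)
    have h2 : (∑ k ∈ Finset.range (n + 1), (N k : ℝ)) = S n := by simp [hS]
    rw [h2] at h
    have h3 : (0 : ℝ) < N (n + 1) := by exact_mod_cast hN (n + 1)
    have h4 : (S n : ℝ) ≤ D * N (n + 1) := by nlinarith
    have h5 : (S n : ℝ) / D ≤ N (n + 1) := by
      rw [div_le_iff₀ hD0]; linarith
    rw [hSsucc]
    push_cast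
    have : (1 + 1 / (D : ℝ)) * S n = S n + S n / D := by ring
    linarith
  have hgrowK : ∀ K n, (1 + 1 / (D : ℝ)) ^ K * S n ≤ S (n + K) := by
    intro K n
    induction K with
    | zero => simp
    | succ K ih =>
      have h := hgrow (n + K)
      have hp : (0 : ℝ) ≤ 1 + 1 / (D : ℝ) := by positivity
      calc (1 + 1 / (D : ℝ)) ^ (K + 1) * S n
          = (1 + 1 / (D : ℝ)) * ((1 + 1 / (D : ℝ)) ^ K * S n) := by ring
        _ ≤ (1 + 1 / (D : ℝ)) * S (n + K) := mul_le_mul_of_nonneg_left ih hp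
        _ ≤ S (n + (K + 1)) := h
  have hgt : (1 : ℝ) < 1 + 1 / (D : ℝ) := by
    have : 0 < 1 / (D : ℝ) := by positivity
    linarith
  obtain ⟨K, hK⟩ := pow_unbounded_of_one_lt (b : ℝ) hgt
  have hSK : ∀ n, b * S n ≤ S (n + K) := by
    intro n
    have h : (b : ℝ) * S n ≤ S (n + K) :=
      le_trans (mul_le_mul_of_nonneg_right hK.le (Nat.cast_nonneg _)) (hgrowK K n)
    exact_mod_cast h
  have ha : ∀ n, 0 < Γ (S n) := fun n => hΓpos _ (hSpos n)
  have haK : ∀ n, 2 * Γ (S n) ≤ Γ (S (n + K)) := by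
    intro n
    exact le_trans (hbΓ _ (hSpos n))
      (hΓmono _ _ (Nat.mul_pos hb (hSpos n)) (hSK n))
  have haN : ∀ n, Γ (S n) ≤ D * Γ (N n) := by
    intro n
    have hNn : (0 : ℝ) < N n := by exact_mod_cast hN n
    have hDN : 1 ≤ D * N n := Nat.mul_pos hD1n (hN n)
    refine le_trans (hΓmono _ _ (hSpos n) (hSD n)) ?_
    have h := hΓdual (N n) (D * N n) (hN n) (Nat.le_mul_of_pos_left _ hD1n)
    rw [div_le_div_iff₀ (hΓpos _ (hN n)) (hΓpos _ hDN)] at h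
    push_cast at h
    nlinarith
  set θ : ℝ := (1 / 2 : ℝ) ^ q with hθdef
  have hθ : θ < 1 := Real.rpow_lt_one (by norm_num) (by norm_num) hq0
  have hB : 0 ≤ (K : ℝ) / (1 - θ) := div_nonneg (Nat.cast_nonneg _) (by linarith)
  refine ⟨((K : ℝ) / (1 - θ)) ^ (1 / q) * D, by positivity, ?_⟩
  intro r m hm R
  have hC : (((K : ℝ) / (1 - θ)) ^ (1 / q) * D) ^ q = (K : ℝ) / (1 - θ) * (D : ℝ) ^ q := by
    rw [Real.mul_rpow (by positivity) hD0.le, ← Real.rpow_mul hB, one_div,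
      inv_mul_cancel₀ hq0.ne', Real.rpow_one]
  rw [hC]
  have key := sum_contract (fun i => (D * Γ (S r) / Γ (S (r + i))) ^ q) K θ hθ
    (fun n => by
      have := ha r
      have := ha (r + n)
      positivity)
    (fun n => by
      have h1 := ha r
      have h2 := ha (r + n)
      have h3 : Γ (S r) ≤ Γ (S (r + n)) := hΓmono _ _ (hSpos r) (hSmono (by omega))
      simp only [add_zero]
      gcongr)
    (fun n => by
      have h1 := ha r
      have h2 := ha (r + n)
      have h3 := haK (r + n)
      simp only [hθdef]
      rw [← Real.mul_rpow (by norm_num) (by positivity)]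
      apply Real.rpow_le_rpow (by have := ha (r + (n + K)); positivity) _ hq0.le
      rw [← add_assoc]
      calc D * Γ (S r) / Γ (S (r + n + K)) ≤ D * Γ (S r) / (2 * Γ (S (r + n))) := by gcongr
        _ = 1 / 2 * (D * Γ (S r) / Γ (S (r + n))) := by field_simp)
    (R + 1 - r)
  simp only [add_zero] at key
  rw [mul_div_assoc, div_self (ha r).ne', mul_one] at key
  refine le_trans ?_ key
  have hI : Finset.Icc r R = Finset.Ico r (R + 1) := by
    ext x; simp only [Finset.mem_Icc, Finset.mem_Ico]; omega
  rw [hI, Finset.sum_Ico_eq_sum_range]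
  apply Finset.sum_le_sum
  intro i _
  obtain ⟨hm1, hm2⟩ := hm (r + i) (by omega)
  have h1 := hΓpos _ hm1
  have h2 := hΓpos _ (hN (r + i))
  have h3 := ha (r + i)
  have h4 := haN (r + i)
  have h5 : Γ (m (r + i)) ≤ Γ (S r) := hΓmono _ _ hm1 hm2
  have h6 := ha r
  apply Real.rpow_le_rpow (by positivity) _ hq0.le
  rw [div_le_div_iff₀ h2 h3]
  calc Γ (m (r + i)) * Γ (S (r + i)) ≤ Γ (S r) * (D * Γ (N (r + i))) := by gcongr
    _ = D * Γ (S r) * Γ (N (r + i)) := by ring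

end AGpaper
end
end
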